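/- Let H be a Schunck class of finite soluble groups and let X be the class of primitive groups in H. Suppose that X is dual closed and subtensor closed. Then H is a saturated formation; indeed H coincides with the class of all finite soluble groups all of whose chief factors are X-central. -/

import Mathlib

/-!
Write `X` for the primitive groups in `H` and `F` for the soluble groups with `X`-central chief
factors.

`F ⊆ H`: if a group in `F` has a primitive quotient `P`, then the socle of `P` is isomorphic to a
chief factor of the group, and `P` is the split extension of its socle. Since split extensions are
unique up to isomorphism (`split_unique`), `P` is in `X`.

`H ⊆ F` is proved by induction on the order of `G ∈ H`. The chief factors above a minimal normal
subgroup `A` are central by induction, so only `A` itself has to be treated.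

* If `A` has a complement `M`, then the quotient of `G` by `M ∩ C(A)` is primitive and is the split
  extension of `A` by `G / C(A)`; so `A` is central (`xc_of_complemented`).
* If `A` is a `p`-group without complement, let `K` be the common kernel of all central irreducible
  modules of `G` over the field with `p` elements. By induction `K` centralizes the `p`-chief
  factors above `A`. A group-theoretic argument (`centralize_of_not_complemented`), based on the
  theorem of Schur and Zassenhaus and on the transfer, shows that `K` then centralizes `A`.
  Subtensor closure says that the central modules are closed under composition factors of tensor
  products (`xc_tensor`). By an analogue of the theorem of Burnside, Brauer and Steinberg
  (`steinberg`), such a family contains every irreducible module on which `K` acts trivially, in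
  particular `A`.

The theorem `steinberg` is proved with functions `G → ZMod p`. A submodule is good if it has a
filtration whose factors are in the family. A maximal good submodule absorbs matrix coefficients and
products with them, hence contains all functions constant on the cosets of `K`. The module in
question embeds there by its matrix coefficients, so it is isomorphic to a factor of the filtration.

Closure of `H` under quotients is clear. For a primitive quotient `P` of `G / (N ∩ M)`, either `P`
is a quotient of `G / N` or of `G / M`, or the socle of `P` is isomorphic to a chief factor of
`G / N`, which is central because `H ⊆ F` (`h_primitive_quotient`). Saturation holds because the
socle of a primitive group is complemented, so it avoids the image of the Frattini subgroup.
-/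

open Function TensorProduct

/-- `A` is a minimal normal subgroup of `G`. -/
def IsMinimalNormalSubgroup (G : Type) [Group G] (A : Subgroup G) : Prop :=
  A.Normal ∧ A ≠ ⊥ ∧ ∀ N : Subgroup G, N.Normal → N ≤ A → N = ⊥ ∨ N = A

/-- `A/B` is a chief factor of `G`: `B ≤ A` are normal subgroups of `G` and `A/B` is a minimal
normal subgroup of `G/B`. -/
def IsChiefFactor (G : Type) [Group G] (A B : Subgroup G) : Prop :=
  A.Normal ∧ B.Normal ∧ B < A ∧
    ∀ N : Subgroup G, N.Normal → B ≤ N → N ≤ A → N = B ∨ N = A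

/-- A primitive group: a group with a minimal normal subgroup equal to its own centralizer. -/
def IsPrimitiveGroup (G : Type) [Group G] : Prop :=
  ∃ K : Subgroup G, IsMinimalNormalSubgroup G K ∧ Subgroup.centralizer (K : Set G) = K

/-- A bundled group. -/
structure GrpB where
  carrier : Type
  [str : Group carrier]

attribute [instance] GrpB.str

instance : CoeSort GrpB Type := ⟨GrpB.carrier⟩

/-- A bundled representation of `G` over `ZMod p`. -/
structure RepB (p : ℕ) (G : Type) [Group G] where
  V : Type
  [instAdd : AddCommGroup V]
  [instMod : Module (ZMod p) V]
  ρ : Representation (ZMod p) G V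

attribute [instance] RepB.instAdd RepB.instMod

/-- A representation is irreducible if the module is nonzero and has no nontrivial proper
invariant submodule. -/
def IsIrreducibleRep {p : ℕ} {G V : Type} [Group G]
    [AddCommGroup V] [Module (ZMod p) V] (ρ : Representation (ZMod p) G V) : Prop :=
  Nontrivial V ∧
    ∀ S : Submodule (ZMod p) V, (∀ (g : G), ∀ v ∈ S, ρ g v ∈ S) → S = ⊥ ∨ S = ⊤

/-- `φ : A → V` realizes the representation `ρ` on `V` as the chief factor module `[A/B]`. -/
def IsChiefFactorMap (p : ℕ) {G : Type} [Group G] (A B : Subgroup G) {V : Type}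
    [AddCommGroup V] [Module (ZMod p) V] (ρ : Representation (ZMod p) G V) (φ : A → V) : Prop :=
  IsChiefFactor G A B ∧
    (∀ a b : A, φ (a * b) = φ a + φ b) ∧
    Function.Surjective φ ∧
    (∀ a : A, φ a = 0 ↔ (a : G) ∈ B) ∧
    (∀ (g : G) (a a' : A), (a' : G) = g * (a : G) * g⁻¹ → φ a' = ρ g (φ a))

/-- `ρV` is (isomorphic to) a composition factor of the representation `ρX`. -/
def IsCompositionFactorOf {p : ℕ} {G V X : Type} [Group G]
    [AddCommGroup V] [Module (ZMod p) V] [AddCommGroup X] [Module (ZMod p) X]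
    (ρV : Representation (ZMod p) G V) (ρX : Representation (ZMod p) G X) : Prop :=
  IsIrreducibleRep ρV ∧
    ∃ T S : Submodule (ZMod p) X,
      (∀ (g : G), ∀ x ∈ T, ρX g x ∈ T) ∧
      (∀ (g : G), ∀ x ∈ S, ρX g x ∈ S) ∧
      S ≤ T ∧
      ∃ ψ : T →ₗ[ZMod p] V, Function.Surjective ψ ∧
        (∀ t : T, ψ t = 0 ↔ (t : X) ∈ S) ∧
        (∀ (g : G) (t t' : T), (t' : X) = ρX g (t : X) → ψ t' = ρV g (ψ t))

/-- `H` is the split extension of the module `V` (with `G` acting via `ρ`) by `G/C_G(V)`: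
`H = V ⋊ (G / C_G(V))`, encoded by an embedding `j` of the additive group of `V` as a
complemented normal subgroup and a homomorphism `π : G → H` with kernel the centralizer of `V`
inducing the action `ρ` by conjugation. -/
def IsSplitModuleExtension {p : ℕ} {G V : Type} [Group G]
    [AddCommGroup V] [Module (ZMod p) V] (ρ : Representation (ZMod p) G V)
    (H : Type) [Group H] : Prop :=
  ∃ (j : V → H) (π : G →* H),
    (∀ v w : V, j (v + w) = j v * j w) ∧
    (∀ v : V, j v = 1 ↔ v = 0) ∧
    (∀ (g : G) (v : V), j (ρ g v) = π g * j v * (π g)⁻¹) ∧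
    (∀ g : G, π g = 1 ↔ ∀ v : V, ρ g v = v) ∧
    (∀ h : H, ∃ (v : V) (g : G), h = j v * π g) ∧
    (∀ (v : V) (g : G), j v * π g = 1 → j v = 1 ∧ π g = 1)

/-- The chief factor `A/B` of `G` is `X`-central: the split extension of `[A/B]` by
`G/C_G(A/B)` belongs to `X`. -/
def IsXCentral (X : GrpB → Prop) (G : Type) [Group G] (A B : Subgroup G) : Prop :=
  IsChiefFactor G A B ∧
    ∃ p : ℕ, p.Prime ∧
      ∃ (M : RepB p G) (φ : A → M.V), IsChiefFactorMap p A B M.ρ φ ∧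
        ∃ H : GrpB, X H ∧ IsSplitModuleExtension M.ρ H.carrier

/-- `X` is closed under isomorphisms. -/
def IsoClosed (X : GrpB → Prop) : Prop :=
  ∀ P Q : GrpB, X P → Nonempty (P.carrier ≃* Q.carrier) → X Q

/-- `X` consists of primitive finite soluble groups. -/
def IsPrimitiveClass (X : GrpB → Prop) : Prop :=
  ∀ P : GrpB, X P → Finite P.carrier ∧ IsSolvable P.carrier ∧ IsPrimitiveGroup P.carrier

/-- `X` is chief factor closed: for `P ∈ X` and every chief factor `A/B` of `P`, the split
extension of `A/B` by `P/C_P(A/B)` is in `X`. -/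
def ChiefFactorClosed (X : GrpB → Prop) : Prop :=
  ∀ P : GrpB, X P → ∀ A B : Subgroup P.carrier, IsChiefFactor P.carrier A B →
    IsXCentral X P.carrier A B

/-- `X` is primitive quotient closed: every primitive quotient of a member of `X` is in `X`. -/
def PrimitiveQuotientClosed (X : GrpB → Prop) : Prop :=
  ∀ P : GrpB, X P → ∀ (H : GrpB) (π : P.carrier →* H.carrier), Function.Surjective π →
    IsPrimitiveGroup H.carrier → X H

/-- `H` is the split extension of the dual module `Hom(A, 𝔽_p)` of the elementary abelian
`p`-group `A = Soc P` by `P/A`: encoded by a normal complemented subgroup `M` of `H`, a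
homomorphism `π : P → H` with kernel `A`, and a perfect equivariant pairing `β` exhibiting `M`
as the dual of `A`. -/
def IsDualSplitExtension (p : ℕ) {P : Type} [Group P] (A : Subgroup P)
    (H : Type) [Group H] : Prop :=
  ∃ (M : Subgroup H) (π : P →* H) (β : M → A → ZMod p),
    M.Normal ∧
    (∀ x : P, π x = 1 ↔ x ∈ A) ∧
    (∀ (m m' : M) (a : A), β (m * m') a = β m a + β m' a) ∧
    (∀ (m : M) (a a' : A), β m (a * a') = β m a + β m a') ∧
    (∀ m : M, (∀ a : A, β m a = 0) → m = 1) ∧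
    (∀ f : A → ZMod p, (∀ a b : A, f (a * b) = f a + f b) →
      ∃ m : M, ∀ a : A, β m a = f a) ∧
    (∀ (x : P) (m m' : M) (a a' : A),
      (m' : H) = π x * (m : H) * (π x)⁻¹ → (a' : P) = x * (a : P) * x⁻¹ → β m' a' = β m a) ∧
    (∀ h : H, ∃ (m : M) (x : P), h = (m : H) * π x) ∧
    (∀ (m : M) (x : P), (m : H) * π x = 1 → (m : H) = 1 ∧ π x = 1)

/-- `X` is dual closed: for every `P ∈ X` with socle `A`, the split extension of the dual
module `Hom(A, 𝔽_p)` by `P/A` is in `X`. -/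
def DualClosed (X : GrpB → Prop) : Prop :=
  ∀ P : GrpB, X P → ∀ (p : ℕ), p.Prime →
    ∀ A : Subgroup P.carrier, IsMinimalNormalSubgroup P.carrier A →
      (∃ n : ℕ, Nat.card A = p ^ n) →
      ∀ H : GrpB, IsDualSplitExtension p A H.carrier → X H

/-- `X` is subtensor closed: for `P, Q ∈ X` with socles `A, B` (elementary abelian for the same
prime `p`), `L` a subdirect sum of `P/A` and `Q/B` (encoded as a subgroup of `P × Q` containing
`A × B` and projecting onto both factors), and `C` a composition factor of the `𝔽_p L`-module
`A ⊗ B`, every primitive split extension of `C` by `L/C_L(C)` is in `X`. -/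
def SubtensorClosed (X : GrpB → Prop) : Prop :=
  ∀ P Q : GrpB, X P → X Q → ∀ (p : ℕ), p.Prime →
    ∀ (A : Subgroup P.carrier) (B : Subgroup Q.carrier),
      IsMinimalNormalSubgroup P.carrier A → IsMinimalNormalSubgroup Q.carrier B →
      ∀ (MA : RepB p P.carrier) (φA : A → MA.V), IsChiefFactorMap p A ⊥ MA.ρ φA →
      ∀ (MB : RepB p Q.carrier) (φB : B → MB.V), IsChiefFactorMap p B ⊥ MB.ρ φB →
      ∀ L : Subgroup (P.carrier × Q.carrier),
        A.prod B ≤ L →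
        Subgroup.map (MonoidHom.fst P.carrier Q.carrier) L = ⊤ →
        Subgroup.map (MonoidHom.snd P.carrier Q.carrier) L = ⊤ →
        ∀ C : RepB p L,
          IsCompositionFactorOf C.ρ
            ((Representation.tprod
              (MA.ρ.comp (MonoidHom.fst P.carrier Q.carrier))
              (MB.ρ.comp (MonoidHom.snd P.carrier Q.carrier))).comp L.subtype) →
          ∀ H : GrpB, IsSplitModuleExtension C.ρ H.carrier → IsPrimitiveGroup H.carrier →
            X H

/-- The class of groups `G` such that `G/N ∈ C`, expressed via surjective homomorphisms with
kernel `N`. -/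
def QuotientIn (C : GrpB → Prop) (G : GrpB) (N : Subgroup G.carrier) : Prop :=
  ∃ (H : GrpB) (π : G.carrier →* H.carrier), Function.Surjective π ∧ π.ker = N ∧ C H

/-- `C` is a formation (of finite soluble groups): it is closed under quotients, and
`G/(N ⊓ M) ∈ C` whenever `G/N ∈ C` and `G/M ∈ C`. -/
def IsFormation (C : GrpB → Prop) : Prop :=
  (∀ G : GrpB, Finite G.carrier → IsSolvable G.carrier → C G →
    ∀ (H : GrpB) (π : G.carrier →* H.carrier), Function.Surjective π → C H) ∧
  (∀ G : GrpB, Finite G.carrier → IsSolvable G.carrier →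
    ∀ N M : Subgroup G.carrier, N.Normal → M.Normal →
      QuotientIn C G N → QuotientIn C G M → QuotientIn C G (N ⊓ M))

/-- `C` is saturated: `G ∈ C` whenever `G` has a normal subgroup `A` contained in the Frattini
subgroup `Φ(G)` (the intersection of all maximal subgroups) with `G/A ∈ C`. -/
def IsSaturated (C : GrpB → Prop) : Prop :=
  ∀ G : GrpB, Finite G.carrier → IsSolvable G.carrier →
    ∀ A : Subgroup G.carrier, A.Normal →
      (∀ x ∈ A, ∀ M : Subgroup G.carrier, IsCoatom M → x ∈ M) →
      QuotientIn C G A → C G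

/-- A saturated formation. -/
def IsSaturatedFormation (C : GrpB → Prop) : Prop :=
  IsFormation C ∧ IsSaturated C

/-- The class of all finite soluble groups all of whose chief factors are `X`-central. -/
def FClass (X : GrpB → Prop) (G : GrpB) : Prop :=
  Finite G.carrier ∧ IsSolvable G.carrier ∧
    ∀ A B : Subgroup G.carrier, IsChiefFactor G.carrier A B → IsXCentral X G.carrier A B

/-- `pdef X`: the class of all finite soluble groups every primitive quotient of which lies
in `X`. -/
def PdefClass (X : GrpB → Prop) (G : GrpB) : Prop :=
  Finite G.carrier ∧ IsSolvable G.carrier ∧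
    ∀ (H : GrpB) (π : G.carrier →* H.carrier), Function.Surjective π →
      IsPrimitiveGroup H.carrier → X H

/-! ### Complements of abelian normal subgroups -/

open MulOpposite MulAction Pointwise in
/-- The conjugacy part of the Schur–Zassenhaus theorem for an abelian normal Hall subgroup `A`:
complements of `A` are the stabilizers of the points of `A.QuotientDiff`, on which `A` acts
transitively. -/
theorem complement_conj {T : Type} [Group T] [Finite T] (A Q₁ Q₂ : Subgroup T) [A.Normal]
    [IsMulCommutative A] (hc : (Nat.card A).Coprime A.index)
    (h₁ : A.IsComplement' Q₁) (h₂ : A.IsComplement' Q₂) :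
    ∃ a ∈ A, ∀ x, x ∈ Q₂ ↔ a⁻¹ * x * a ∈ Q₁ := by
  have key : ∀ Q : Subgroup T, A.IsComplement' Q →
      ∃ α : A.QuotientDiff, Q = stabilizer T α := by
    intro Q hQ
    let β : A.LeftTransversal := ⟨(Q : Set T), hQ.symm⟩
    let α : A.QuotientDiff := (Quotient.mk'' β : A.QuotientDiff)
    refine ⟨α, ?_⟩
    have hle : Q ≤ stabilizer T α := by
      intro q hq
      rw [mem_stabilizer_iff]
      change (Quotient.mk'' (op q⁻¹ • β) : A.QuotientDiff) = (Quotient.mk'' β : A.QuotientDiff)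
      congr 1
      apply Subtype.ext
      ext x
      change x ∈ op q⁻¹ • (Q : Set T) ↔ x ∈ (Q : Set T)
      rw [Set.mem_smul_set]
      constructor
      · rintro ⟨y, hy, rfl⟩
        exact Q.mul_mem hy (Q.inv_mem hq)
      · intro hx
        exact ⟨x * q, Q.mul_mem hx hq, by simp⟩
    have hs := Subgroup.isComplement'_stabilizer_of_coprime (α := α) hc
    apply Subgroup.eq_of_le_of_card_ge hle
    have e1 := hs.card_mul_card
    have e2 := hQ.card_mul_card
    have : 0 < Nat.card A := Nat.card_pos
    exact (Nat.eq_of_mul_eq_mul_left this (e1.trans e2.symm)).le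
  obtain ⟨α, rfl⟩ := key Q₁ h₁
  obtain ⟨β, rfl⟩ := key Q₂ h₂
  obtain ⟨a, ha⟩ := Subgroup.exists_smul_eq hc α β
  refine ⟨a, a.2, fun x => ?_⟩
  have ha' : (a : T) • α = β := ha
  rw [mem_stabilizer_iff, mem_stabilizer_iff, ← ha', mul_smul, mul_smul, inv_smul_eq_iff]

theorem isPGroup_of_pow {p : ℕ} {G : Type} [Group G] (S R : Subgroup G) [S.Normal]
    (h : ∀ r ∈ R, r ^ p ∈ S) : IsPGroup p (R ⧸ S.subgroupOf R) := by
  intro x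
  induction x using QuotientGroup.induction_on with
  | H r =>
    refine ⟨1, ?_⟩
    rw [pow_one, ← QuotientGroup.mk_pow, QuotientGroup.eq_one_iff, Subgroup.mem_subgroupOf]
    simpa using h r r.2

theorem relIndex_pow {p : ℕ} (hp : p.Prime) {G : Type} [Group G] [Finite G] (S R : Subgroup G)
    [S.Normal] (h : ∀ r ∈ R, r ^ p ∈ S) : ∃ n, S.relIndex R = p ^ n := by
  have : Fact p.Prime := ⟨hp⟩
  exact (IsPGroup.iff_card.1 (isPGroup_of_pow S R h))

theorem card_pow {p : ℕ} (hp : p.Prime) {G : Type} [Group G] [Finite G] (A : Subgroup G)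
    (h : ∀ r ∈ A, r ^ p = 1) : ∃ n, Nat.card A = p ^ n := by
  have : Fact p.Prime := ⟨hp⟩
  refine (IsPGroup.iff_card.1 fun x => ⟨1, ?_⟩)
  ext
  simpa using h x x.2

/-- If `E = AN` with `A` abelian, a subgroup of `A` normalized by `N` is normal in `E`. -/
theorem inf_normal_of_sup_top {E : Type} [Group E] (A N : Subgroup E) [A.Normal]
    (hab : ∀ a ∈ A, ∀ b ∈ A, a * b = b * a) (B : Subgroup E) (hBA : B ≤ A)
    (hB : ∀ n ∈ N, ∀ b ∈ B, n * b * n⁻¹ ∈ B) (htop : A ⊔ N = ⊤) : B.Normal := by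
  constructor
  intro b hb g
  have hg : g ∈ A ⊔ N := by rw [htop]; trivial
  rw [Subgroup.mem_sup_of_normal_left] at hg
  obtain ⟨a, ha, n, hn, rfl⟩ := hg
  have h1 := hB n hn b hb
  have h2 := hab a ha _ (hBA h1)
  have : a * n * b * (a * n)⁻¹ = n * b * n⁻¹ := by
    calc a * n * b * (a * n)⁻¹ = (a * (n * b * n⁻¹)) * a⁻¹ := by group
      _ = n * b * n⁻¹ := by rw [h2]; group
  rw [this]
  exact h1

/-- If a normal subgroup `T` of `E` contains the minimal normal abelian subgroup `A` with coprime
index and does not centralize it, then `A` is complemented in `E`: the normalizer of a complement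
of `A` in `T` is a complement of `A` in `E`. -/
theorem complement_of_coprime {E : Type} [Group E] [Finite E] (A T : Subgroup E)
    (hA : IsMinimalNormalSubgroup E A) (hab : ∀ a ∈ A, ∀ b ∈ A, a * b = b * a)
    [hT : T.Normal] (hAT : A ≤ T) (hc : (Nat.card A).Coprime (A.relIndex T))
    (hne : ¬ ∀ t ∈ T, ∀ a ∈ A, t * a = a * t) :
    ∃ M : Subgroup E, A ⊓ M = ⊥ ∧ A ⊔ M = ⊤ := by
  obtain ⟨hAn, hA1, hAmin⟩ := hA
  let A' : Subgroup T := A.subgroupOf T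
  have hA'n : A'.Normal := inferInstance
  have hA'c : IsMulCommutative A' := ⟨⟨fun a b => by
    ext; exact hab _ a.2 _ b.2⟩⟩
  have hcard : Nat.card A' = Nat.card A := Nat.card_congr (Subgroup.subgroupOfEquivOfLe hAT).toEquiv
  have hc' : (Nat.card A').Coprime A'.index := by rw [hcard]; exact hc
  obtain ⟨Q', hQ'⟩ := Subgroup.exists_right_complement'_of_coprime hc'
  let Q : Subgroup E := Q'.map T.subtype
  have hQT : Q ≤ T := Subgroup.map_subtype_le _
  have hmem : ∀ (x : E) (hx : x ∈ T), x ∈ Q ↔ (⟨x, hx⟩ : T) ∈ Q' := by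
    intro x hx
    constructor
    · rintro ⟨y, hy, rfl⟩; exact hy
    · intro h; exact ⟨_, h, rfl⟩
  let N := Subgroup.normalizer (Q : Set E)
  have htop : A ⊔ N = ⊤ := by
    rw [eq_top_iff]
    intro e _
    let c : T ≃* T := MulAut.conjNormal e
    have hc2 : A'.IsComplement' (Q'.map c.toMonoidHom) := by
      apply Subgroup.isComplement'_of_card_mul_and_disjoint
      · rw [Subgroup.card_map_of_injective (f := c.toMonoidHom) c.injective]
        exact hQ'.card_mul_card
      · rw [disjoint_iff, eq_bot_iff]
        rintro x ⟨hx, y, hy, rfl⟩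
        have hyA : y ∈ A' := by
          have h := hAn.conj_mem _ hx e⁻¹
          change e⁻¹ * (e * (y : E) * e⁻¹) * e⁻¹⁻¹ ∈ A at h
          have h' : (y : E) ∈ A := by simpa [mul_assoc] using h
          exact h'
        have := hQ'.disjoint.le_bot ⟨hyA, hy⟩
        rw [Subgroup.mem_bot] at this ⊢
        rw [this, map_one]
    obtain ⟨a, ha, hconj⟩ := complement_conj A' Q' _ hc' hQ' hc2
    rw [Subgroup.mem_sup_of_normal_left]
    refine ⟨a, ha, (a : E)⁻¹ * e, ?_, by group⟩
    change _ ∈ Subgroup.normalizer _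
    apply Subgroup.mem_normalizer_iff.2
    intro x
    by_cases hx : x ∈ T
    · have h2 := hconj (c ⟨x, hx⟩)
      have h3 : c ⟨x, hx⟩ ∈ Q'.map c.toMonoidHom ↔ (⟨x, hx⟩ : T) ∈ Q' := by
        constructor
        · rintro ⟨y, hy, h⟩
          rw [← c.injective h]; exact hy
        · intro h; exact ⟨_, h, rfl⟩
      rw [hmem x hx, ← h3, h2]
      have hxT : (a : E)⁻¹ * e * x * ((a : E)⁻¹ * e)⁻¹ ∈ T := hT.conj_mem _ hx _
      rw [hmem _ hxT]
      have : (a⁻¹ * c ⟨x, hx⟩ * a) = (⟨_, hxT⟩ : T) := by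
        ext
        change (a : E)⁻¹ * (e * x * e⁻¹) * a = _
        simp [mul_assoc]
      rw [this]
    · have hxT : ¬ (a : E)⁻¹ * e * x * ((a : E)⁻¹ * e)⁻¹ ∈ T := by
        intro h
        apply hx
        have := hT.conj_mem _ h ((a : E)⁻¹ * e)⁻¹
        simpa [mul_assoc] using this
      exact ⟨fun h => absurd (hQT h) hx, fun h => absurd (hQT h) hxT⟩
  refine ⟨N, ?_, htop⟩
  have hn : (A ⊓ N).Normal := by
    refine inf_normal_of_sup_top A N hab _ inf_le_left ?_ htop
    intro n hn b hb
    exact ⟨hAn.conj_mem _ hb.1 _, N.mul_mem (N.mul_mem hn hb.2) (N.inv_mem hn)⟩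
  rcases hAmin _ hn inf_le_left with h | h
  · exact h
  · exfalso
    apply hne
    have hAN : A ≤ N := inf_eq_left.1 h
    have hAQ : ∀ a ∈ A, ∀ q ∈ Q, q * a = a * q := by
      intro a ha q hq
      have h1 : a * q * a⁻¹ ∈ Q := (Subgroup.mem_normalizer_iff.1 (hAN ha) q).1 hq
      have h2 : a * q * a⁻¹ * q⁻¹ ∈ Q := Q.mul_mem h1 (Q.inv_mem hq)
      have h3 : a * q * a⁻¹ * q⁻¹ ∈ A := by
        have := A.mul_mem ha (hAn.conj_mem _ (A.inv_mem ha) q)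
        simpa [mul_assoc] using this
      have h4 := hQ'.disjoint.le_bot (show (⟨_, hAT h3⟩ : T) ∈ A' ⊓ Q' from
        ⟨h3, (hmem _ _).1 h2⟩)
      rw [Subgroup.mem_bot] at h4
      have h5 : a * q * a⁻¹ * q⁻¹ = 1 := congrArg Subtype.val h4
      have h6 : a * q = q * a := by
        have := congrArg (fun z => z * q * a) h5
        simpa [mul_assoc] using this
      exact h6.symm
    intro t ht a ha
    have : (⟨t, ht⟩ : T) ∈ A' ⊔ Q' := by rw [hQ'.sup_eq_top]; trivial
    rw [Subgroup.mem_sup_of_normal_left] at this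
    obtain ⟨b, hb, q, hq, hbq⟩ := this
    have e : t = (b : E) * q := (congrArg Subtype.val hbq).symm
    have hb' : (b : E) * a = a * b := hab _ hb _ ha
    rw [e, mul_assoc, hAQ a ha q ((hmem _ q.2).2 hq), ← mul_assoc, hb', mul_assoc]

/-! ### Chief factors -/

theorem elementary_of_minimal {G : Type} [Group G] [Finite G] [Group.IsSolvable G]
    {A : Subgroup G} (hA : IsMinimalNormalSubgroup G A) :
    ∃ q : ℕ, q.Prime ∧ (∀ a ∈ A, a ^ q = 1) ∧ ∀ a ∈ A, ∀ b ∈ A, a * b = b * a := by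
  obtain ⟨hAn, hA1, hAmin⟩ := hA
  have hlt : ⁅A, A⁆ < A := Group.IsSolvable.commutator_lt_of_ne_bot hA1
  have hbot : ⁅A, A⁆ = ⊥ := (hAmin _ inferInstance hlt.le).resolve_right hlt.ne
  have hab : ∀ a ∈ A, ∀ b ∈ A, a * b = b * a := by
    intro a ha b hb
    have := Subgroup.commutator_mem_commutator ha hb
    rw [hbot, Subgroup.mem_bot] at this
    exact commutatorElement_eq_one_iff_mul_comm.1 this
  have hcard : Nat.card A ≠ 1 := by
    intro h
    exact hA1 (Subgroup.card_eq_one.1 h)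
  obtain ⟨q, hq, hdvd⟩ := Nat.exists_prime_and_dvd hcard
  have : Fact q.Prime := ⟨hq⟩
  refine ⟨q, hq, ?_, hab⟩
  let B : Subgroup G :=
    { carrier := {a | a ∈ A ∧ a ^ q = 1}
      one_mem' := ⟨A.one_mem, one_pow _⟩
      mul_mem' := by
        rintro a b ⟨ha, ha'⟩ ⟨hb, hb'⟩
        refine ⟨A.mul_mem ha hb, ?_⟩
        rw [(show Commute a b from hab a ha b hb).mul_pow, ha', hb', one_mul]
      inv_mem' := by
        rintro a ⟨ha, ha'⟩
        exact ⟨A.inv_mem ha, by rw [inv_pow, ha', inv_one]⟩ }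
  have hB : B.Normal := ⟨by
    rintro a ⟨ha, ha'⟩ g
    exact ⟨hAn.conj_mem _ ha g, by rw [conj_pow, ha']; simp⟩⟩
  have hBA : B = A := by
    refine (hAmin B hB fun x hx => hx.1).resolve_left ?_
    obtain ⟨x, hx⟩ := exists_prime_orderOf_dvd_card' q hdvd
    intro h
    have hx1 : x ^ q = 1 := by rw [← hx]; exact pow_orderOf_eq_one x
    have : (x : G) ∈ B := ⟨x.2, by simpa using congrArg Subtype.val hx1⟩
    rw [h, Subgroup.mem_bot] at this
    have h1 : x = 1 := Subtype.ext this
    rw [h1, orderOf_one] at hx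
    exact hq.one_lt.ne hx
  intro a ha
  rw [← hBA] at ha
  exact ha.2

theorem chief_map {G Q : Type} [Group G] [Group Q] (π : G →* Q) (hπ : Function.Surjective π)
    {R S : Subgroup G} (h : IsChiefFactor G R S) (hS : π.ker ≤ S) :
    IsChiefFactor Q (R.map π) (S.map π) := by
  obtain ⟨hR, hSn, hlt, hmin⟩ := h
  refine ⟨hR.map π hπ, hSn.map π hπ, ?_, ?_⟩
  · refine lt_of_le_of_ne (Subgroup.map_mono hlt.le) fun he => hlt.ne ?_
    rw [← Subgroup.comap_map_eq_self hS, he, Subgroup.comap_map_eq_self (hS.trans hlt.le)]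
  · intro N hN h1 h2
    have h3 := hmin (N.comap π) (hN.comap π) (Subgroup.map_le_iff_le_comap.1 h1) (by
      rw [← Subgroup.comap_map_eq_self (hS.trans hlt.le)]
      exact Subgroup.comap_mono h2)
    rw [← Subgroup.map_comap_eq_self_of_surjective hπ N]
    rcases h3 with h3 | h3
    · left; rw [h3]
    · right; rw [h3]

theorem chief_bot {G : Type} [Group G] {A : Subgroup G} :
    IsChiefFactor G A ⊥ ↔ IsMinimalNormalSubgroup G A := by
  constructor
  · rintro ⟨h1, h2, h3, h4⟩
    exact ⟨h1, h3.ne', fun N hN hNA => h4 N hN bot_le hNA⟩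
  · rintro ⟨h1, h2, h3⟩
    exact ⟨h1, inferInstance, bot_lt_iff_ne_bot.2 h2, fun N hN _ hNA => h3 N hN hNA⟩

theorem chief_elementary {G : Type} [Group G] [Finite G] [Group.IsSolvable G]
    {R S : Subgroup G} (h : IsChiefFactor G R S) :
    ∃ q : ℕ, q.Prime ∧ ∀ r ∈ R, r ^ q ∈ S := by
  have := h.2.1
  have h1 := chief_map (QuotientGroup.mk' S) (QuotientGroup.mk'_surjective S) h (by simp)
  rw [QuotientGroup.map_mk'_self, chief_bot] at h1
  obtain ⟨q, hq, hq1, -⟩ := elementary_of_minimal h1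
  refine ⟨q, hq, fun r hr => ?_⟩
  have := hq1 _ (Subgroup.mem_map_of_mem _ hr)
  rw [← map_pow] at this
  exact (QuotientGroup.eq_one_iff (r ^ q)).1 this

theorem exists_chief_bot {G : Type} [Group G] [Finite G] (S T : Subgroup G)
    [hS : S.Normal] [hT : T.Normal] (h : S < T) :
    ∃ R, R ≤ T ∧ IsChiefFactor G R S := by
  obtain ⟨R, hR⟩ := Set.Finite.exists_minimal (s := {R : Subgroup G | R.Normal ∧ S < R ∧ R ≤ T})
    (Set.toFinite _) ⟨T, hT, h, le_rfl⟩
  refine ⟨R, hR.prop.2.2, hR.prop.1, hS, hR.prop.2.1, ?_⟩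
  intro N hN h1 h2
  rcases h1.eq_or_lt with h3 | h3
  · exact Or.inl h3.symm
  · exact Or.inr (le_antisymm h2 (hR.le_of_le ⟨hN, h3, h2.trans hR.prop.2.2⟩ h2))

theorem exists_chief_top {G : Type} [Group G] [Finite G] (S T : Subgroup G)
    [hS : S.Normal] [hT : T.Normal] (h : S < T) :
    ∃ R, S ≤ R ∧ IsChiefFactor G T R := by
  obtain ⟨R, hR⟩ := Set.Finite.exists_maximal (s := {R : Subgroup G | R.Normal ∧ S ≤ R ∧ R < T})
    (Set.toFinite _) ⟨S, hS, le_rfl, h⟩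
  refine ⟨R, hR.prop.2.1, hT, hR.prop.1, hR.prop.2.2, ?_⟩
  intro N hN h1 h2
  rcases h2.eq_or_lt with h3 | h3
  · exact Or.inr h3
  · exact Or.inl (le_antisymm (hR.le_of_ge ⟨hN, hR.prop.2.1.trans h1, h3⟩ h1) h1)

/-- A normal subgroup which acts on a minimal normal `p`-subgroup `A` as a `p`-group acts
trivially, since the fixed points of a `p`-group on a nontrivial `p`-group are nontrivial. -/
theorem centralize_of_pow {E : Type} [Group E] [Finite E] {p : ℕ} (hp : p.Prime)
    {A : Subgroup E} (hA : IsMinimalNormalSubgroup E A) (hAp : ∀ a ∈ A, a ^ p = 1)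
    (S T : Subgroup E) [hT : T.Normal] (hS : ∀ s ∈ S, ∀ a ∈ A, s * a = a * s)
    (hTS : ∀ t ∈ T, t ^ p ∈ S) : ∀ t ∈ T, ∀ a ∈ A, t * a = a * t := by
  have : Fact p.Prime := ⟨hp⟩
  obtain ⟨hAn, hA1, hAmin⟩ := hA
  have hCn : (A ⊓ Subgroup.centralizer (T : Set E)).Normal := inferInstance
  rcases hAmin _ hCn inf_le_left with h | h
  · exfalso
    let θ : T →* MulAut A := MulAut.conjNormal.comp T.subtype
    have hθ : ∀ (t : T) (a : A), ((θ t a : A) : E) = t * a * (t : E)⁻¹ := fun t a => by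
      simp [θ]
    have hP : IsPGroup p θ.range := by
      rintro ⟨_, t, rfl⟩
      refine ⟨1, ?_⟩
      apply Subtype.ext
      change (θ t) ^ (p ^ 1) = 1
      rw [pow_one, ← map_pow]
      ext a
      rw [hθ]
      have h1 := hS _ (hTS t t.2) a a.2
      rw [Subgroup.coe_pow, h1]
      simp
    have hdvd : p ∣ Nat.card A := by
      obtain ⟨n, hn⟩ := card_pow hp A hAp
      rw [hn]
      apply dvd_pow_self
      rintro rfl
      exact hA1 (Subgroup.card_eq_one.1 (by simpa using hn))
    obtain ⟨b, hb, hb1⟩ := hP.exists_fixed_point_of_prime_dvd_card_of_fixed_point A hdvd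
      (a := 1) (fun g => map_one (g : MulAut A))
    have hbm : (b : E) ∈ A ⊓ Subgroup.centralizer (T : Set E) := by
      refine ⟨b.2, Subgroup.mem_centralizer_iff.2 fun t ht => ?_⟩
      have h1 : θ ⟨t, ht⟩ b = b := hb ⟨θ ⟨t, ht⟩, ⟨t, ht⟩, rfl⟩
      have h2 := hθ ⟨t, ht⟩ b
      rw [h1] at h2
      exact (eq_mul_inv_iff_mul_eq.1 h2).symm
    rw [h, Subgroup.mem_bot] at hbm
    exact hb1 (Subtype.ext hbm.symm)
  · intro t ht a ha
    rw [← h] at ha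
    exact Subgroup.mem_centralizer_iff.1 ha.2 t ht

/-- The socle of a finite soluble primitive group is complemented. -/
theorem primitive_complement {P : Type} [Group P] [Finite P] [Group.IsSolvable P]
    {K : Subgroup P} (hK : IsMinimalNormalSubgroup P K)
    (hC : Subgroup.centralizer (K : Set P) = K) :
    ∃ M : Subgroup P, K ⊓ M = ⊥ ∧ K ⊔ M = ⊤ := by
  obtain ⟨p, hp, hexp, hab⟩ := elementary_of_minimal hK
  have hKn := hK.1
  by_cases hKT : K = ⊤
  · exact ⟨⊥, by simp, by simp [hKT]⟩
  obtain ⟨T, -, hT⟩ := exists_chief_bot K ⊤ (lt_top_iff_ne_top.2 hKT)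
  have hTn := hT.1
  obtain ⟨q, hq, hqK⟩ := chief_elementary hT
  have hne : ¬ ∀ t ∈ T, ∀ a ∈ K, t * a = a * t := by
    intro h
    apply hT.2.2.1.not_ge
    rw [← hC]
    intro t ht
    exact Subgroup.mem_centralizer_iff.2 fun a ha => (h t ht a ha).symm
  refine complement_of_coprime K T hK hab hT.2.2.1.le ?_ hne
  obtain ⟨n, hn⟩ := relIndex_pow hq K T hqK
  obtain ⟨m, hm⟩ := card_pow hp K hexp
  rw [hn, hm]
  apply Nat.Coprime.pow
  rw [Nat.coprime_primes hp hq]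
  rintro rfl
  exact hne (centralize_of_pow hp hK hexp K T hab hqK)

/-- If the order of `T/A` is divisible by `p`, there is a `p`-chief factor `R/S` between `A` and `T`
with `T/R` of order prime to `p`: take `R` minimal with the last property. -/
theorem exists_p_chief {E : Type} [Group E] [Finite E] [Group.IsSolvable E] {p : ℕ} (hp : p.Prime)
    (A T : Subgroup E) [hA : A.Normal] [hT : T.Normal] (hAT : A ≤ T) :
    p.Coprime (A.relIndex T) ∨ ∃ R S, IsChiefFactor E R S ∧ A ≤ S ∧ R ≤ T ∧
      (∀ r ∈ R, r ^ p ∈ S) ∧ p.Coprime (R.relIndex T) := by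
  obtain ⟨R, hR⟩ := Set.Finite.exists_minimal
    (s := {R : Subgroup E | R.Normal ∧ A ≤ R ∧ R ≤ T ∧ p.Coprime (R.relIndex T)})
    (Set.toFinite _) ⟨T, hT, hAT, le_rfl, by simp⟩
  obtain ⟨hRn, hAR, hRT, hRc⟩ := hR.prop
  rcases hAR.eq_or_lt with rfl | hlt
  · exact Or.inl hRc
  right
  obtain ⟨S, hAS, hS⟩ := exists_chief_top A R hlt
  have := hS.2.1
  obtain ⟨q, hq, hqS⟩ := chief_elementary hS
  refine ⟨R, S, hS, hAS, hRT, ?_, hRc⟩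
  by_cases hpq : p = q
  · rw [hpq]; exact hqS
  · exfalso
    obtain ⟨n, hn⟩ := relIndex_pow hq S R hqS
    refine hS.2.2.1.not_ge (hR.le_of_le ⟨hS.2.1, hAS, hS.2.2.1.le.trans hRT, ?_⟩ hS.2.2.1.le)
    rw [← Subgroup.relIndex_mul_relIndex S R T hS.2.2.1.le hRT, hn]
    exact Nat.Coprime.mul_right (Nat.Coprime.pow_right _ ((Nat.coprime_primes hp hq).2 hpq)) hRc

/-- Raising to the power `|Γ : Z|` is multiplicative for a central subgroup `Z`, being the
transfer into `Z`. -/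
theorem pow_index_mul_of_central {Γ : Type} [Group Γ] [Finite Γ] (Z : Subgroup Γ)
    (hZ : Z ≤ Subgroup.center Γ) (x y : Γ) :
    (x * y) ^ Z.index = x ^ Z.index * y ^ Z.index := by
  have hc : IsMulCommutative Z := ⟨⟨fun a b => by
    ext; exact (Subgroup.mem_center_iff.1 (hZ a.2) b).symm⟩⟩
  let _ : CommGroup Z := { (inferInstance : Group Z) with mul_comm := hc.1.1 }
  have key : ∀ (g : Γ) (k : ℕ) (g₀ : Γ), g₀⁻¹ * g ^ k * g₀ ∈ Z → g₀⁻¹ * g ^ k * g₀ = g ^ k := by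
    intro g k g₀ h
    have := Subgroup.mem_center_iff.1 (hZ h) g₀
    have h2 : g ^ k * g₀ = g₀⁻¹ * g ^ k * g₀ * g₀ := by
      rw [← this]; group
    exact (mul_right_cancel h2).symm
  have h := map_mul (MonoidHom.transfer (MonoidHom.id Z)) x y
  rw [MonoidHom.transfer_eq_pow _ _ (key _), MonoidHom.transfer_eq_pow _ _ (key _),
    MonoidHom.transfer_eq_pow _ _ (key _)] at h
  exact congrArg Subtype.val h

/-- If the minimal normal `p`-subgroup `A` of `E` is not complemented, then a normal subgroup
which centralizes all `p`-chief factors of `E` above `A` also centralizes `A`.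

Let `T ≤ AK` be normal in `E`, minimal among those containing but not centralizing `A`. If `T/A` has
order prime to `p`, then `A` is complemented. Otherwise take a `p`-chief factor `R/S` with `T/R` of
order prime to `p`. If `R = T`, then `T` acts on `A` as a `p`-group. If `R < T`, then `R/S` is
central in `T/S`, hence `T = RQ` with `Q < T`, and both factors centralize `A` by minimality. -/
theorem centralize_of_not_complemented {E : Type} [Group E] [Finite E] [Group.IsSolvable E]
    {p : ℕ} (hp : p.Prime) {A : Subgroup E} (hA : IsMinimalNormalSubgroup E A)
    (hAp : ∀ a ∈ A, a ^ p = 1) (hab : ∀ a ∈ A, ∀ b ∈ A, a * b = b * a)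
    (hnc : ¬ ∃ M : Subgroup E, A ⊓ M = ⊥ ∧ A ⊔ M = ⊤) (K : Subgroup E) [hKn : K.Normal]
    (hK : ∀ R S, IsChiefFactor E R S → A ≤ S → (∀ r ∈ R, r ^ p ∈ S) →
      ∀ k ∈ K, ∀ r ∈ R, k * r * k⁻¹ * r⁻¹ ∈ S) :
    ∀ k ∈ K, ∀ a ∈ A, k * a = a * k := by
  by_contra hcon
  have hAn := hA.1
  obtain ⟨T, hT⟩ := Set.Finite.exists_minimal
    (s := {T : Subgroup E | T.Normal ∧ A ≤ T ∧ T ≤ A ⊔ K ∧ ¬ ∀ t ∈ T, ∀ a ∈ A, t * a = a * t})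
    (Set.toFinite _) ⟨A ⊔ K, inferInstance, le_sup_left, le_rfl,
      fun h => hcon fun k hk => h k (Subgroup.mem_sup_right hk)⟩
  obtain ⟨hTn, hAT, hTK, hTne⟩ := hT.prop
  have hmin : ∀ Q : Subgroup E, Q.Normal → A ≤ Q → Q < T → ∀ t ∈ Q, ∀ a ∈ A, t * a = a * t := by
    intro Q hQ h1 h2
    by_contra h3
    exact h2.not_ge (hT.le_of_le ⟨hQ, h1, h2.le.trans hTK, h3⟩ h2.le)
  rcases exists_p_chief hp A T hAT with hco | ⟨R, S, hRS, hAS, hRT, hpow, hRc⟩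
  · obtain ⟨n, hn⟩ := card_pow hp A hAp
    exact hnc (complement_of_coprime A T hA hab hAT (by rw [hn]; exact hco.pow_left n) hTne)
  have hSn := hRS.2.1
  have hRn := hRS.1
  have hST : S < T := hRS.2.2.1.trans_le hRT
  rcases hRT.eq_or_lt with rfl | hlt
  · exact hTne (centralize_of_pow hp hA hAp S R (hmin S hSn hAS hST) hpow)
  have hcent : ∀ t ∈ T, ∀ r ∈ R, t * r * t⁻¹ * r⁻¹ ∈ S := by
    intro t ht r hr
    have ht' := hTK ht
    rw [Subgroup.mem_sup_of_normal_left] at ht'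
    obtain ⟨a, ha, k, hk, rfl⟩ := ht'
    have h1 := hK R S hRS hAS hpow k hk r hr
    have h2 : a ∈ S := hAS ha
    have h3 : r * a⁻¹ * r⁻¹ ∈ S := hSn.conj_mem _ (S.inv_mem h2) r
    have : a * k * r * (a * k)⁻¹ * r⁻¹ = a * (k * r * k⁻¹ * r⁻¹) * (r * a⁻¹ * r⁻¹) := by group
    rw [this]
    exact S.mul_mem (S.mul_mem h2 h1) h3
  let n := R.relIndex T
  let Γ := T ⧸ S.subgroupOf T
  let Z : Subgroup Γ := (R.subgroupOf T).map (QuotientGroup.mk' (S.subgroupOf T))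
  have hZ : Z ≤ Subgroup.center Γ := by
    rintro _ ⟨r, hr, rfl⟩
    rw [Subgroup.mem_center_iff]
    intro g
    obtain ⟨t, rfl⟩ := QuotientGroup.mk'_surjective _ g
    rw [← map_mul, ← map_mul]
    have h := hcent _ (T.inv_mem t.2) _ (R.inv_mem hr)
    apply QuotientGroup.eq.2
    rw [Subgroup.mem_subgroupOf]
    simpa [mul_assoc] using S.inv_mem h
  have hZi : Z.index = n := by
    have hk : (QuotientGroup.mk' (S.subgroupOf T)).ker ≤ R.subgroupOf T := by
      rw [QuotientGroup.ker_mk']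
      exact Subgroup.comap_mono hRS.2.2.1.le
    exact Subgroup.index_map_eq _ (QuotientGroup.mk'_surjective _) hk
  have hpm : ∀ x ∈ T, ∀ y ∈ T, ∃ s ∈ S, (x * y) ^ n = x ^ n * y ^ n * s := by
    intro x hx y hy
    have h := pow_index_mul_of_central Z hZ (QuotientGroup.mk' _ ⟨x, hx⟩)
      (QuotientGroup.mk' _ ⟨y, hy⟩)
    rw [hZi, ← map_mul, ← map_pow, ← map_pow, ← map_pow, ← map_mul] at h
    have h2 := QuotientGroup.eq.1 h.symm
    rw [Subgroup.mem_subgroupOf] at h2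
    refine ⟨_, h2, ?_⟩
    simp [mul_assoc]
  -- `R/S` is central in `T/S`, so raising to the power `n = |T : R|` is an endomorphism of `T/S`;
  -- its kernel `Q/S` is a complement of `R/S`, as `n` is prime to `p`.
  let Q : Subgroup E :=
    { carrier := {t | t ∈ T ∧ t ^ n ∈ S}
      one_mem' := ⟨T.one_mem, by rw [one_pow]; exact S.one_mem⟩
      mul_mem' := by
        rintro a b ⟨ha, ha'⟩ ⟨hb, hb'⟩
        refine ⟨T.mul_mem ha hb, ?_⟩
        obtain ⟨s, hs, e⟩ := hpm a ha b hb
        rw [e]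
        exact S.mul_mem (S.mul_mem ha' hb') hs
      inv_mem' := by
        rintro a ⟨ha, ha'⟩
        exact ⟨T.inv_mem ha, by rw [inv_pow]; exact S.inv_mem ha'⟩ }
  have hQn : Q.Normal := ⟨by
    rintro a ⟨ha, ha'⟩ g
    exact ⟨hTn.conj_mem _ ha g, by rw [conj_pow]; exact hSn.conj_mem _ ha' g⟩⟩
  have hSQ : S ≤ Q := fun s hs => ⟨hST.le hs, S.pow_mem hs n⟩
  have hcop : IsCoprime (p : ℤ) (n : ℤ) := Nat.isCoprime_iff_coprime.2 hRc
  obtain ⟨u, v, huv⟩ := hcop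
  have hsplit : ∀ t : E, t = (t ^ n) ^ v * (t ^ p) ^ u := by
    intro t
    rw [← zpow_natCast, ← zpow_natCast, ← zpow_mul, ← zpow_mul, ← zpow_add, mul_comm (n : ℤ),
      mul_comm (p : ℤ), add_comm, huv, zpow_one]
  have hQT : Q < T := by
    refine lt_of_le_of_ne (fun t ht => ht.1) fun he => ?_
    apply hRS.2.2.1.not_ge
    intro r hr
    have hrQ : r ∈ Q := by rw [he]; exact hRT hr
    rw [hsplit r]
    exact S.mul_mem (S.zpow_mem hrQ.2 _) (S.zpow_mem (hpow r hr) _)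
  apply hTne
  intro t ht a ha
  have h1 : t ^ n ∈ R := by
    have := (R.subgroupOf T).pow_index_mem ⟨t, ht⟩
    exact this
  have h2 : t ^ p ∈ Q := by
    refine ⟨T.pow_mem ht p, ?_⟩
    rw [← pow_mul, mul_comm, pow_mul]
    exact hpow _ h1
  have c1 : Commute ((t ^ n) ^ v) a := Commute.zpow_left (hmin R hRn (hAS.trans hRS.2.2.1.le) hlt
    _ h1 a ha) v
  have c2 : Commute ((t ^ p) ^ u) a := Commute.zpow_left (hmin Q hQn (hAS.trans hSQ) hQT
    _ h2 a ha) u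
  have := c1.mul_left c2
  rw [← hsplit t] at this
  exact this

/-! ### Primitive groups and split extensions -/

/-- The projection of a semidirect product onto the complement of the normal factor. -/
theorem exists_proj {P : Type} [Group P] (K M : Subgroup P) [K.Normal] (h1 : K ⊓ M = ⊥)
    (h2 : K ⊔ M = ⊤) :
    ∃ q : P →* P, (∀ h, q h ∈ M) ∧ (∀ h, h * (q h)⁻¹ ∈ K) ∧ ∀ h, q h = 1 ↔ h ∈ K := by
  have hex : ∀ h : P, ∃ m ∈ M, h * m⁻¹ ∈ K := by
    intro h
    have hh : h ∈ K ⊔ M := by rw [h2]; trivial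
    rw [Subgroup.mem_sup_of_normal_left] at hh
    obtain ⟨k, hk, m, hm, rfl⟩ := hh
    exact ⟨m, hm, by simpa using hk⟩
  have huniq : ∀ h m m', m ∈ M → m' ∈ M → h * m⁻¹ ∈ K → h * m'⁻¹ ∈ K → m = m' := by
    intro h m m' hm hm' hk hk'
    have : m * m'⁻¹ ∈ K ⊓ M := by
      refine ⟨?_, M.mul_mem hm (M.inv_mem hm')⟩
      have := K.mul_mem (K.inv_mem hk) hk'
      simpa [mul_assoc] using this
    rw [h1, Subgroup.mem_bot] at this
    exact mul_inv_eq_one.1 this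
  choose q hqM hqK using hex
  have hmul : ∀ x y, q (x * y) = q x * q y := by
    intro x y
    refine huniq (x * y) _ _ (hqM _) (M.mul_mem (hqM x) (hqM y)) (hqK _) ?_
    have h3 := (inferInstance : K.Normal).conj_mem _ (hqK y) x
    have h4 := K.mul_mem h3 (hqK x)
    simpa [mul_assoc] using h4
  refine ⟨MonoidHom.mk' q hmul, hqM, hqK, fun h => ⟨fun hh => ?_, fun hh => ?_⟩⟩
  · have := hqK h
    rw [show q h = 1 from hh] at this
    simpa using this
  · exact huniq h _ _ (hqM h) M.one_mem (hqK h) (by simpa using hh)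

/-- A primitive quotient `P` of `G` is a split extension of each module of `G` which is
realized by a normal subgroup of `G` mapping onto the socle of `P`. -/
theorem split_of_primitive {p : ℕ} {G P V : Type} [Group G] [Group P] [AddCommGroup V]
    [Module (ZMod p) V] (ρ : Representation (ZMod p) G V) [Finite P] [Group.IsSolvable P]
    (π : G →* P) (hπ : Function.Surjective π) {K : Subgroup P}
    (hK : IsMinimalNormalSubgroup P K) (hC : Subgroup.centralizer (K : Set P) = K)
    (M : Subgroup G) [hMn : M.Normal] (hM : M.map π = K) (φ : M → V)
    (hadd : ∀ a b, φ (a * b) = φ a + φ b) (hsurj : Function.Surjective φ)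
    (hker : ∀ a : M, φ a = 0 ↔ π a = 1)
    (heq : ∀ (g : G) (a a' : M), (a' : G) = g * (a : G) * g⁻¹ → φ a' = ρ g (φ a)) :
    IsSplitModuleExtension ρ P := by
  obtain ⟨Mc, hc1, hc2⟩ := primitive_complement hK hC
  have hKn := hK.1
  have hab : ∀ a ∈ K, ∀ b ∈ K, a * b = b * a := by
    intro a ha b hb
    rw [← hC] at hb
    exact Subgroup.mem_centralizer_iff.1 hb a ha
  obtain ⟨q, hqM, hqK, hq1⟩ := exists_proj K Mc hc1 hc2
  have h1 : φ 1 = 0 := (hker 1).2 (by simp)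
  have hinv : ∀ a, φ a⁻¹ = - φ a := by
    intro a
    have := hadd a a⁻¹
    rw [mul_inv_cancel, h1] at this
    exact (neg_eq_of_add_eq_zero_right this.symm).symm
  have hinj : ∀ a b : M, φ a = φ b ↔ π a = π b := by
    intro a b
    have := hker (a * b⁻¹)
    rw [hadd, hinv, add_neg_eq_zero] at this
    rw [this]
    simp [mul_inv_eq_one]
  choose s hs using hsurj
  have hj : ∀ a : M, π (s (φ a)) = π a := fun a => (hinj _ _).1 (hs _)
  have hsK : ∀ a : M, π a ∈ K := fun a => by
    rw [← hM]; exact Subgroup.mem_map_of_mem _ a.2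
  have hconj : ∀ (g : G) (a : M), π (s (ρ g (φ a))) = π g * π a * (π g)⁻¹ := by
    intro g a
    rw [← heq g a ⟨_, hMn.conj_mem _ a.2 g⟩ rfl, hj]
    simp
  refine ⟨fun v => π (s v), q.comp π, ?_, ?_, ?_, ?_, ?_, ?_⟩
  · intro v w
    change π (s (v + w)) = π (s v) * π (s w)
    nth_rw 1 [← hs v, ← hs w]
    rw [← hadd, hj]
    simp
  · intro v
    change π (s v) = 1 ↔ _
    rw [← hker, hs]
  · intro g v
    obtain ⟨a, rfl⟩ : ∃ a, φ a = v := ⟨s v, hs v⟩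
    change π (s (ρ g (φ a))) = q (π g) * π (s (φ a)) * (q (π g))⁻¹
    rw [hconj, hj]
    have h3 := hab _ (hqK (π g)) _ (hKn.conj_mem _ (hsK a) (q (π g)))
    have : π g * π a * (π g)⁻¹ = (π g * (q (π g))⁻¹) * (q (π g) * π a * (q (π g))⁻¹)
        * (π g * (q (π g))⁻¹)⁻¹ := by group
    rw [this, h3]
    group
  · intro g
    change q (π g) = 1 ↔ _
    rw [hq1]
    constructor
    · intro hg v
      obtain ⟨a, rfl⟩ : ∃ a, φ a = v := ⟨s v, hs v⟩
      have h3 := hconj g a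
      rw [hab _ hg _ (hsK a), mul_inv_cancel_right, ← hj a, ← hinj] at h3
      rwa [hs, hs] at h3
    · intro h
      rw [← hC, Subgroup.mem_centralizer_iff]
      intro x hx
      rw [SetLike.mem_coe, ← hM] at hx
      obtain ⟨a, ha, rfl⟩ := hx
      have h3 := hconj g ⟨a, ha⟩
      rw [h, hj] at h3
      exact (eq_mul_inv_iff_mul_eq.1 h3)
  · intro h
    obtain ⟨g, rfl⟩ := hπ h
    have := hqK (π g)
    rw [← hM] at this
    obtain ⟨a, ha, e⟩ := this
    refine ⟨φ ⟨a, ha⟩, g, ?_⟩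
    change _ = π (s (φ ⟨a, ha⟩)) * q (π g)
    rw [hj, e]
    simp
  · intro v g h
    change π (s v) * q (π g) = 1 at h
    have h3 : q (π g) ∈ K ⊓ Mc := by
      refine ⟨?_, hqM _⟩
      rw [← inv_eq_of_mul_eq_one_right h]
      exact K.inv_mem (hsK _)
    rw [hc1, Subgroup.mem_bot] at h3
    refine ⟨?_, h3⟩
    change π (s v) = 1
    simpa [h3] using h

/-- The maps `j : V → H` and `π : G → H` exhibit `H` as the split extension of the module `V` by
the quotient of `G` acting faithfully on it. -/
structure SplitPair {p : ℕ} {G V H : Type} [Group G] [AddCommGroup V] [Module (ZMod p) V]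
    [Group H] (ρ : Representation (ZMod p) G V) (j : V → H) (π : G →* H) : Prop where
  add : ∀ v w : V, j (v + w) = j v * j w
  zero : ∀ v : V, j v = 1 ↔ v = 0
  conj : ∀ (g : G) (v : V), j (ρ g v) = π g * j v * (π g)⁻¹
  ker : ∀ g : G, π g = 1 ↔ ∀ v : V, ρ g v = v
  span : ∀ h : H, ∃ (v : V) (g : G), h = j v * π g
  inter : ∀ (v : V) (g : G), j v * π g = 1 → j v = 1 ∧ π g = 1

theorem exists_splitPair {p : ℕ} {G V H : Type} [Group G] [AddCommGroup V] [Module (ZMod p) V]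
    [Group H] {ρ : Representation (ZMod p) G V} :
    IsSplitModuleExtension ρ H ↔ ∃ (j : V → H) (π : G →* H), SplitPair ρ j π :=
  ⟨fun ⟨j, π, h1, h2, h3, h4, h5, h6⟩ => ⟨j, π, h1, h2, h3, h4, h5, h6⟩,
    fun ⟨j, π, h1, h2, h3, h4, h5, h6⟩ => ⟨j, π, h1, h2, h3, h4, h5, h6⟩⟩

namespace SplitPair

variable {p : ℕ} {G V H : Type} [Group G] [AddCommGroup V] [Module (ZMod p) V]
    [Group H] {ρ : Representation (ZMod p) G V} {j : V → H} {π : G →* H}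

theorem neg (h : SplitPair ρ j π) (v : V) : j (-v) = (j v)⁻¹ := by
  refine (inv_eq_of_mul_eq_one_right ?_).symm
  rw [← h.add, h.zero]
  simp

theorem inj (h : SplitPair ρ j π) {v w : V} (e : j v = j w) : v = w := by
  rw [← sub_eq_zero, ← h.zero, sub_eq_add_neg, h.add, h.neg, e, mul_inv_cancel]

theorem π_eq (h : SplitPair ρ j π) {g g' : G} : π g = π g' ↔ ρ g = ρ g' := by
  rw [← inv_mul_eq_one, ← map_inv, ← map_mul, h.ker]
  constructor
  · intro e
    ext v
    have := congrArg (ρ g) (e v)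
    rw [← Module.End.mul_apply, ← map_mul] at this
    simpa using this.symm
  · intro e v
    rw [map_mul, ← e, ← map_mul]
    simp

theorem mul_form (h : SplitPair ρ j π) (v w : V) (g g' : G) :
    (j v * π g) * (j w * π g') = j (v + ρ g w) * π (g * g') := by
  rw [h.add, h.conj, map_mul]
  group

theorem form_inj (h : SplitPair ρ j π) {v w : V} {g g' : G}
    (e : j v * π g = j w * π g') : v = w ∧ ρ g = ρ g' := by
  have h1 : j (-w + v) * π (g * g'⁻¹) = 1 := by
    rw [h.add, h.neg, map_mul, map_inv]
    have : (j w)⁻¹ * j v * (π g * (π g')⁻¹) = (j w)⁻¹ * (j v * π g) * (π g')⁻¹ := by group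
    rw [this, e]
    group
  obtain ⟨h2, h3⟩ := h.inter _ _ h1
  rw [h.zero, neg_add_eq_zero] at h2
  rw [map_mul, map_inv, mul_inv_eq_one, h.π_eq] at h3
  exact ⟨h2.symm, h3⟩

theorem conj_form (h : SplitPair ρ j π) (v w : V) (g : G) :
    (j v * π g) * j w * (j v * π g)⁻¹ = j (ρ g w) := by
  have : (j v * π g) * j w * (j v * π g)⁻¹ = j v * (π g * j w * (π g)⁻¹) * (j v)⁻¹ := by group
  rw [this, ← h.conj, ← h.neg, ← h.add, ← h.add]
  congr 1
  abel

/-- The image of the module, as a subgroup of the split extension. -/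
def base (h : SplitPair ρ j π) : Subgroup H where
  carrier := Set.range j
  one_mem' := ⟨0, (h.zero 0).2 rfl⟩
  mul_mem' := by
    rintro _ _ ⟨v, rfl⟩ ⟨w, rfl⟩
    exact ⟨v + w, h.add v w⟩
  inv_mem' := by
    rintro _ ⟨v, rfl⟩
    exact ⟨-v, h.neg v⟩

theorem mem_base (h : SplitPair ρ j π) {x : H} : x ∈ h.base ↔ ∃ v, j v = x := Iff.rfl

theorem base_minimal (h : SplitPair ρ j π) (hirr : IsIrreducibleRep ρ) :
    IsMinimalNormalSubgroup H h.base := by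
  obtain ⟨hnt, hirr⟩ := hirr
  refine ⟨⟨?_⟩, ?_, ?_⟩
  · rintro _ ⟨w, rfl⟩ x
    obtain ⟨v, g, rfl⟩ := h.span x
    exact ⟨ρ g w, (h.conj_form v w g).symm⟩
  · intro hb
    obtain ⟨v, hv⟩ := exists_ne (0 : V)
    have : j v ∈ h.base := ⟨v, rfl⟩
    rw [hb, Subgroup.mem_bot, h.zero] at this
    exact hv this
  · intro N hN hle
    let W : AddSubgroup V :=
      { carrier := {v | j v ∈ N}
        zero_mem' := by
          change j 0 ∈ N
          rw [(h.zero 0).2 rfl]; exact N.one_mem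
        add_mem' := by
          intro a b ha hb
          change j (a + b) ∈ N
          rw [h.add]; exact N.mul_mem ha hb
        neg_mem' := by
          intro a ha
          change j (-a) ∈ N
          rw [h.neg]; exact N.inv_mem ha }
    have hW : ∀ v, v ∈ AddSubgroup.toZModSubmodule p W ↔ j v ∈ N := fun v => Iff.rfl
    rcases hirr (AddSubgroup.toZModSubmodule p W) (by
      intro g v hv
      rw [hW] at hv ⊢
      rw [h.conj]
      exact hN.conj_mem _ hv _) with e | e
    · left
      rw [eq_bot_iff]
      intro x hx
      obtain ⟨v, rfl⟩ := hle hx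
      have := (hW v).2 hx
      rw [e, Submodule.mem_bot] at this
      rw [Subgroup.mem_bot, h.zero, this]
    · right
      refine le_antisymm hle ?_
      rintro _ ⟨v, rfl⟩
      rw [← hW, e]
      trivial

theorem base_centralizer (h : SplitPair ρ j π) :
    Subgroup.centralizer (h.base : Set H) = h.base := by
  ext x
  rw [Subgroup.mem_centralizer_iff]
  constructor
  · intro hx
    obtain ⟨v, g, rfl⟩ := h.span x
    refine ⟨v, ?_⟩
    have : π g = 1 := by
      rw [h.ker]
      intro w
      apply h.inj
      rw [← h.conj_form v, ← hx (j w) ⟨w, rfl⟩, mul_inv_cancel_right]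
    rw [this, mul_one]
  · rintro ⟨v, rfl⟩ _ ⟨w, rfl⟩
    rw [← h.add, ← h.add, add_comm]

end SplitPair

theorem primitive_of_split {p : ℕ} {G V H : Type} [Group G] [AddCommGroup V]
    [Module (ZMod p) V] [Group H] {ρ : Representation (ZMod p) G V}
    (h : IsSplitModuleExtension ρ H) (hirr : IsIrreducibleRep ρ) : IsPrimitiveGroup H := by
  obtain ⟨j, π, h⟩ := exists_splitPair.1 h
  exact ⟨h.base, h.base_minimal hirr, h.base_centralizer⟩

/-- The split extension of a module is unique up to isomorphism. -/
theorem split_unique {p : ℕ} {G P Q V : Type} [Group G] [Group P] [Group Q] [AddCommGroup V]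
    [Module (ZMod p) V] {ρ : Representation (ZMod p) G V}
    (hP : IsSplitModuleExtension ρ P)
    (hQ : IsSplitModuleExtension ρ Q) : Nonempty (P ≃* Q) := by
  obtain ⟨j₁, π₁, h₁⟩ := exists_splitPair.1 hP
  obtain ⟨j₂, π₂, h₂⟩ := exists_splitPair.1 hQ
  choose s t hst using h₁.span
  have hf : ∀ v g, j₂ (s (j₁ v * π₁ g)) * π₂ (t (j₁ v * π₁ g)) = j₂ v * π₂ g := by
    intro v g
    obtain ⟨e1, e2⟩ := h₁.form_inj (hst (j₁ v * π₁ g))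
    rw [← e1, ← h₂.π_eq.2 e2]
  let f : P →* Q := MonoidHom.mk' (fun x => j₂ (s x) * π₂ (t x)) (by
    intro x y
    obtain ⟨v, g, rfl⟩ := h₁.span x
    obtain ⟨w, g', rfl⟩ := h₁.span y
    rw [h₁.mul_form, hf, hf, hf, h₂.mul_form])
  refine ⟨MulEquiv.ofBijective f ⟨?_, ?_⟩⟩
  · intro x y e
    obtain ⟨e1, e2⟩ := h₂.form_inj (show j₂ (s x) * π₂ (t x) = j₂ (s y) * π₂ (t y) from e)
    rw [hst x, hst y, e1, h₁.π_eq.2 e2]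
  · intro y
    obtain ⟨v, g, rfl⟩ := h₂.span y
    exact ⟨j₁ v * π₁ g, hf v g⟩

/-- Split extensions only depend on the image of the acting group. -/
theorem split_pullback {p : ℕ} {G L V H : Type} [Group G] [Group L] [AddCommGroup V]
    [Module (ZMod p) V] [Group H] {ρ : Representation (ZMod p) G V}
    {σ : Representation (ZMod p) L V} (ℓ : G →* L) (h1 : ∀ g, ρ g = σ (ℓ g))
    (h2 : ∀ l, ∃ g, σ l = ρ g) (h : IsSplitModuleExtension σ H) :
    IsSplitModuleExtension ρ H := by
  obtain ⟨j, π, h⟩ := exists_splitPair.1 h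
  refine exists_splitPair.2 ⟨j, π.comp ℓ, h.add, h.zero, ?_, ?_, ?_, ?_⟩
  · intro g v
    rw [h1, h.conj]
    rfl
  · intro g
    rw [h1]
    exact h.ker _
  · intro x
    obtain ⟨v, l, rfl⟩ := h.span x
    obtain ⟨g, hg⟩ := h2 l
    rw [h1, ← h.π_eq] at hg
    exact ⟨v, g, by rw [hg]; rfl⟩
  · intro v g
    exact h.inter v (ℓ g)

theorem split_iso {p : ℕ} {G V W H : Type} [Group G] [AddCommGroup V]
    [Module (ZMod p) V] [AddCommGroup W] [Module (ZMod p) W] [Group H]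
    {ρ : Representation (ZMod p) G V} {σ : Representation (ZMod p) G W}
    (e : W ≃ₗ[ZMod p] V) (he : ∀ g w, e (σ g w) = ρ g (e w))
    (h : IsSplitModuleExtension ρ H) : IsSplitModuleExtension σ H := by
  obtain ⟨j, π, h⟩ := exists_splitPair.1 h
  refine exists_splitPair.2 ⟨j ∘ e, π, ?_, ?_, ?_, ?_, ?_, ?_⟩
  · intro v w
    simp [h.add]
  · intro v
    simp [h.zero]
  · intro g v
    simp [he, h.conj]
  · intro g
    rw [h.ker]
    constructor
    · intro hv w
      apply e.injective
      rw [he, hv]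
    · intro hw v
      have := he g (e.symm v)
      rw [hw, e.apply_symm_apply] at this
      exact this.symm
  · intro x
    obtain ⟨v, g, rfl⟩ := h.span x
    exact ⟨e.symm v, g, by simp⟩
  · intro v g
    exact h.inter (e v) g

/-- Every module has a split extension. -/
theorem exists_split {p : ℕ} {G V : Type} [Group G] [AddCommGroup V]
    [Module (ZMod p) V] (ρ : Representation (ZMod p) G V) :
    ∃ H : GrpB, IsSplitModuleExtension ρ H.carrier := by
  have hρ : ∀ (g g' : G) (v : V), ρ g (ρ g' v) = ρ (g * g') v := fun g g' v => by
    rw [map_mul]; rfl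
  let θ : G →* MulAut (Multiplicative V) :=
    { toFun := fun g =>
        { toFun := fun v => Multiplicative.ofAdd (ρ g v.toAdd)
          invFun := fun v => Multiplicative.ofAdd (ρ g⁻¹ v.toAdd)
          left_inv := fun v => by simp [hρ]
          right_inv := fun v => by simp [hρ]
          map_mul' := fun v w => by simp }
      map_one' := by ext v; simp
      map_mul' := fun g g' => by
        ext v
        simp }
  have hθ : ∀ g v, θ g (Multiplicative.ofAdd v) = Multiplicative.ofAdd (ρ g v) := fun _ _ => rfl
  refine ⟨⟨Multiplicative V ⋊[θ.range.subtype] θ.range⟩, exists_splitPair.2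
    ⟨fun v => SemidirectProduct.inl (Multiplicative.ofAdd v),
      SemidirectProduct.inr.comp θ.rangeRestrict, ?_, ?_, ?_, ?_, ?_, ?_⟩⟩
  · intro v w
    simp
  · intro v
    rw [map_eq_one_iff _ SemidirectProduct.inl_injective]
    rfl
  · intro g v
    rw [← hθ]
    have e := SemidirectProduct.inl_aut (φ := θ.range.subtype) (θ.rangeRestrict g)
      (Multiplicative.ofAdd v)
    rwa [map_inv] at e
  · intro g
    change SemidirectProduct.inr (θ.rangeRestrict g) = 1 ↔ _
    rw [map_eq_one_iff _ SemidirectProduct.inr_injective]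
    constructor
    · intro e v
      have e' : θ g = 1 := congrArg Subtype.val e
      exact DFunLike.congr_fun e' (Multiplicative.ofAdd v)
    · intro e
      apply Subtype.ext
      ext v
      exact e v.toAdd
  · intro x
    obtain ⟨g, hg⟩ := θ.rangeRestrict_surjective x.right
    refine ⟨x.left.toAdd, g, ?_⟩
    change x = SemidirectProduct.inl x.left * SemidirectProduct.inr (θ.rangeRestrict g)
    rw [hg, SemidirectProduct.inl_left_mul_inr_right]
  · intro v g e
    change SemidirectProduct.inl _ * SemidirectProduct.inr (θ.rangeRestrict g) = 1 at e
    have e1 := congrArg SemidirectProduct.right e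
    have e2 := congrArg SemidirectProduct.left e
    simp only [SemidirectProduct.mul_right, SemidirectProduct.right_inl,
      SemidirectProduct.right_inr, one_mul, SemidirectProduct.one_right] at e1
    simp only [SemidirectProduct.mul_left, SemidirectProduct.left_inl,
      SemidirectProduct.left_inr, map_one, mul_one, SemidirectProduct.one_left] at e2
    exact ⟨by rw [e2, map_one], by
      change SemidirectProduct.inr (θ.rangeRestrict g) = 1
      rw [e1, map_one]⟩

/-! ### Central modules -/

/-- A homomorphism of `G` which is compatible with a multiplicative relation between `L` and `G`
descends to `L`. -/
theorem descend {L G N : Type} [Group L] [Group G] [Monoid N] (r : L → G → Prop)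
    (hr : ∀ l, ∃ g, r l g) (hmul : ∀ l l' g g', r l g → r l' g' → r (l * l') (g * g'))
    (f : G →* N) (hf : ∀ l g g', r l g → r l g' → f g = f g') :
    ∃ f' : L →* N, ∀ l g, r l g → f' l = f g := by
  choose s hs using hr
  have h : ∀ x y, f (s (x * y)) = f (s x) * f (s y) := fun x y => by
    rw [← map_mul]
    exact hf _ _ _ (hs _) (hmul _ _ _ _ (hs x) (hs y))
  refine ⟨⟨⟨fun l => f (s l), ?_⟩, h⟩, fun l g hlg => hf _ _ _ (hs l) hlg⟩
  have h1 := h 1 1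
  rw [mul_one] at h1
  have h2 : f (s 1)⁻¹ * f (s 1) = 1 := by rw [← map_mul, inv_mul_cancel, map_one]
  have h3 := congrArg (f (s 1)⁻¹ * ·) h1
  simp only [← mul_assoc, h2, one_mul] at h3
  exact h3.symm

/-- The socle of a split extension, as a module for that extension. -/
theorem SplitPair.exists_module {p : ℕ} {G V H : Type} [Group G] [AddCommGroup V]
    [Module (ZMod p) V] [Group H] {ρ : Representation (ZMod p) G V} {j : V → H} {π : G →* H}
    (h : SplitPair ρ j π) (hirr : IsIrreducibleRep ρ) :
    ∃ (σ : Representation (ZMod p) H V) (φ : h.base → V),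
      (∀ v g, σ (j v * π g) = ρ g) ∧ IsChiefFactorMap p h.base ⊥ σ φ := by
  obtain ⟨σ, hσ⟩ := descend (fun x g => ∃ v, x = j v * π g)
    (fun x => by obtain ⟨v, g, e⟩ := h.span x; exact ⟨g, v, e⟩)
    (by
      rintro _ _ g g' ⟨v, rfl⟩ ⟨w, rfl⟩
      exact ⟨_, h.mul_form v w g g'⟩)
    ρ (by
      rintro _ g g' ⟨v, rfl⟩ ⟨w, e⟩
      exact (h.form_inj e).2)
  have hσ' : ∀ v g, σ (j v * π g) = ρ g := fun v g => hσ _ _ ⟨v, rfl⟩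
  choose φ hφ using fun x : h.base => x.2
  refine ⟨σ, φ, hσ', chief_bot.2 (h.base_minimal hirr), ?_, ?_, ?_, ?_⟩
  · intro a b
    apply h.inj
    rw [h.add, hφ, hφ, hφ]
    rfl
  · intro v
    exact ⟨⟨j v, v, rfl⟩, h.inj (hφ ⟨j v, v, rfl⟩)⟩
  · intro a
    rw [← h.zero, hφ, Subgroup.mem_bot]
  · intro x a a' e
    obtain ⟨v, g, rfl⟩ := h.span x
    apply h.inj
    rw [hσ', hφ, ← h.conj_form v, hφ, e]

/-- The module of the representation `ρ` is `X`-central: its split extension lies in `X`. -/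
def XC {p : ℕ} {G V : Type} [Group G] [AddCommGroup V] [Module (ZMod p) V] (X : GrpB → Prop)
    (ρ : Representation (ZMod p) G V) : Prop :=
  ∃ H : GrpB, X H ∧ IsSplitModuleExtension ρ H.carrier

/-- Subtensor closure, expressed for modules of a fixed group. -/
theorem xc_tensor {X : GrpB → Prop} (hX : SubtensorClosed X) {p : ℕ} (hp : p.Prime)
    {G V₁ V₂ V : Type} [Group G] [AddCommGroup V₁] [Module (ZMod p) V₁] [AddCommGroup V₂]
    [Module (ZMod p) V₂] [AddCommGroup V] [Module (ZMod p) V]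
    {ρ₁ : Representation (ZMod p) G V₁} {ρ₂ : Representation (ZMod p) G V₂}
    {ρ : Representation (ZMod p) G V} (hi₁ : IsIrreducibleRep ρ₁) (hi₂ : IsIrreducibleRep ρ₂)
    (h₁ : XC X ρ₁) (h₂ : XC X ρ₂)
    (hρ : IsCompositionFactorOf ρ (Representation.tprod ρ₁ ρ₂)) : XC X ρ := by
  obtain ⟨P, hP, hs₁⟩ := h₁
  obtain ⟨Q, hQ, hs₂⟩ := h₂
  obtain ⟨j₁, π₁, s₁⟩ := exists_splitPair.1 hs₁
  obtain ⟨j₂, π₂, s₂⟩ := exists_splitPair.1 hs₂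
  obtain ⟨σ₁, φ₁, hσ₁, hφ₁⟩ := s₁.exists_module hi₁
  obtain ⟨σ₂, φ₂, hσ₂, hφ₂⟩ := s₂.exists_module hi₂
  obtain ⟨hirr, T, S, hT, hS, hST, ψ, hψ, hψS, hψe⟩ := hρ
  have hker : ∀ g g', ρ₁ g = ρ₁ g' → ρ₂ g = ρ₂ g' → ρ g = ρ g' := by
    intro g g' e1 e2
    ext v
    obtain ⟨t, rfl⟩ := hψ v
    rw [← hψe g t ⟨_, hT g t t.2⟩ rfl, ← hψe g' t ⟨_, hT g' t t.2⟩ rfl]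
    congr 2
    simp only [Representation.tprod_apply, e1, e2]
  let r : P.carrier × Q.carrier → G → Prop := fun x g => ∃ v w, x = (j₁ v * π₁ g, j₂ w * π₂ g)
  have hr1 : ∀ v w g, r (j₁ v * π₁ g, j₂ w * π₂ g) g := fun v w g => ⟨v, w, rfl⟩
  have hrmul : ∀ x y g g', r x g → r y g' → r (x * y) (g * g') := by
    rintro _ _ g g' ⟨v, w, rfl⟩ ⟨v', w', rfl⟩
    exact ⟨v + ρ₁ g v', w + ρ₂ g w', Prod.ext (s₁.mul_form ..) (s₂.mul_form ..)⟩
  have hj1 : j₁ 0 = 1 := (s₁.zero 0).2 rfl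
  have hj2 : j₂ 0 = 1 := (s₂.zero 0).2 rfl
  have hrπ : ∀ g, r (π₁ g, π₂ g) g := fun g => ⟨0, 0, by rw [hj1, hj2, one_mul, one_mul]⟩
  let L : Subgroup (P.carrier × Q.carrier) :=
    { carrier := {x | ∃ g, r x g}
      one_mem' := ⟨1, by
        have h := hrπ 1
        rw [map_one, map_one] at h
        exact h⟩
      mul_mem' := by
        rintro x y ⟨g, hg⟩ ⟨g', hg'⟩
        exact ⟨_, hrmul _ _ _ _ hg hg'⟩
      inv_mem' := by
        rintro _ ⟨g, v, w, rfl⟩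
        refine ⟨g⁻¹, ρ₁ g⁻¹ (-v), ρ₂ g⁻¹ (-w), ?_⟩
        rw [s₁.conj, s₂.conj, s₁.neg, s₂.neg]
        apply Prod.ext <;> simp }
  obtain ⟨C, hC⟩ := descend (fun (l : L) g => r l g) (fun l => l.2)
    (fun l l' g g' => hrmul l l' g g') ρ (by
      rintro l g g' ⟨v, w, e⟩ ⟨v', w', e'⟩
      rw [e'] at e
      have e1 := congrArg Prod.fst e
      have e2 := congrArg Prod.snd e
      exact hker g g' (s₁.form_inj e1).2.symm (s₂.form_inj e2).2.symm)
  let τ : Representation (ZMod p) L (V₁ ⊗[ZMod p] V₂) := (Representation.tprod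
      (σ₁.comp (MonoidHom.fst P.carrier Q.carrier))
      (σ₂.comp (MonoidHom.snd P.carrier Q.carrier))).comp L.subtype
  have hτ : ∀ (l : L) g, r l g → τ l = Representation.tprod ρ₁ ρ₂ g := by
    rintro ⟨_, hl⟩ g ⟨v, w, rfl⟩
    change TensorProduct.map (σ₁ (j₁ v * π₁ g)) (σ₂ (j₂ w * π₂ g)) = _
    rw [hσ₁, hσ₂]
    rfl
  obtain ⟨H, hH⟩ := exists_split C
  have hirrC : IsIrreducibleRep C := by
    refine ⟨hirr.1, fun S hS => hirr.2 S fun g v hv => ?_⟩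
    rw [← hC ⟨_, g, hrπ g⟩ g (hrπ g)]
    exact hS _ v hv
  have hcf : IsCompositionFactorOf C τ := by
    refine ⟨hirrC, T, S, ?_, ?_, hST, ψ, hψ, hψS, ?_⟩
    · intro l x hx
      obtain ⟨g, hg⟩ := l.2
      rw [hτ l g hg]
      exact hT g x hx
    · intro l x hx
      obtain ⟨g, hg⟩ := l.2
      rw [hτ l g hg]
      exact hS g x hx
    · intro l t t' e
      obtain ⟨g, hg⟩ := l.2
      rw [hτ l g hg] at e
      rw [hC l g hg]
      exact hψe g t t' e
  refine ⟨H, ?_, ?_⟩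
  · refine hX P Q hP hQ p hp s₁.base s₂.base (s₁.base_minimal hi₁) (s₂.base_minimal hi₂)
      ⟨V₁, σ₁⟩ φ₁ hφ₁ ⟨V₂, σ₂⟩ φ₂ hφ₂ L ?_ ?_ ?_ ⟨V, C⟩ hcf H hH (primitive_of_split hH hirrC)
    · rintro ⟨_, _⟩ ⟨⟨v, rfl⟩, ⟨w, rfl⟩⟩
      exact ⟨1, v, w, by simp⟩
    · rw [eq_top_iff]
      rintro x -
      obtain ⟨v, g, rfl⟩ := s₁.span x
      exact ⟨_, ⟨g, hr1 v 0 g⟩, rfl⟩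
    · rw [eq_top_iff]
      rintro x -
      obtain ⟨v, g, rfl⟩ := s₂.span x
      exact ⟨_, ⟨g, hr1 0 v g⟩, rfl⟩
  · let ℓ : G →* L := MonoidHom.mk' (fun g => ⟨(π₁ g, π₂ g), g, hrπ g⟩) (by
      intro g g'
      apply Subtype.ext
      simp)
    refine split_pullback ℓ (fun g => (hC _ g (hrπ g)).symm) (fun l => ?_) hH
    obtain ⟨g, hg⟩ := l.2
    exact ⟨g, hC l g hg⟩

theorem IsChiefFactorMap.irreducible {p : ℕ} {G V : Type} [Group G] [AddCommGroup V]
    [Module (ZMod p) V] {ρ : Representation (ZMod p) G V} {A B : Subgroup G} {φ : A → V}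
    (h : IsChiefFactorMap p A B ρ φ) : IsIrreducibleRep ρ := by
  obtain ⟨⟨hA, hB, hlt, hmin⟩, hadd, hsurj, hker, heq⟩ := h
  constructor
  · obtain ⟨a, ha, hab⟩ := SetLike.exists_of_lt hlt
    exact ⟨φ ⟨a, ha⟩, 0, fun e => hab ((hker _).1 e)⟩
  · intro S hS
    have h1 : φ 1 = 0 := (hker 1).2 B.one_mem
    let N : Subgroup G :=
      { carrier := {a | ∃ ha : a ∈ A, φ ⟨a, ha⟩ ∈ S}
        one_mem' := ⟨A.one_mem, by
          rw [show (⟨1, A.one_mem⟩ : A) = 1 from rfl, h1]; exact S.zero_mem⟩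
        mul_mem' := by
          rintro a b ⟨ha, ha'⟩ ⟨hb, hb'⟩
          refine ⟨A.mul_mem ha hb, ?_⟩
          have := hadd ⟨a, ha⟩ ⟨b, hb⟩
          rw [show (⟨a * b, A.mul_mem ha hb⟩ : A) = ⟨a, ha⟩ * ⟨b, hb⟩ from rfl, this]
          exact S.add_mem ha' hb'
        inv_mem' := by
          rintro a ⟨ha, ha'⟩
          refine ⟨A.inv_mem ha, ?_⟩
          have := hadd ⟨a, ha⟩ ⟨a, ha⟩⁻¹
          rw [mul_inv_cancel, h1] at this
          rw [show (⟨a⁻¹, A.inv_mem ha⟩ : A) = ⟨a, ha⟩⁻¹ from rfl,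
            ← neg_eq_of_add_eq_zero_right this.symm]
          exact S.neg_mem ha' }
    have hN : ∀ a : A, (a : G) ∈ N ↔ φ a ∈ S := fun a => ⟨fun ⟨_, h⟩ => h, fun h => ⟨a.2, h⟩⟩
    rcases hmin N ⟨by
      rintro a ⟨ha, ha'⟩ g
      refine ⟨hA.conj_mem a ha g, ?_⟩
      rw [heq g ⟨a, ha⟩ ⟨_, hA.conj_mem a ha g⟩ rfl]
      exact hS g _ ha'⟩ (fun b hb => ⟨hlt.le hb, by
        rw [(hker ⟨b, hlt.le hb⟩).2 hb]; exact S.zero_mem⟩) (fun a ha => ha.1) with e | e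
    · left
      rw [eq_bot_iff]
      intro v hv
      obtain ⟨a, rfl⟩ := hsurj v
      rw [← hN, e, ← hker] at hv
      exact hv
    · right
      rw [eq_top_iff]
      intro v _
      obtain ⟨a, rfl⟩ := hsurj v
      rw [← hN, e]
      exact a.2

theorem IsChiefFactorMap.comm_mem {p : ℕ} {G V : Type} [Group G] [AddCommGroup V]
    [Module (ZMod p) V] {ρ : Representation (ZMod p) G V} {A B : Subgroup G} {φ : A → V}
    (h : IsChiefFactorMap p A B ρ φ) (g : G) (hg : ρ g = 1) :
    ∀ a ∈ A, g * a * g⁻¹ * a⁻¹ ∈ B := by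
  obtain ⟨⟨hA, hB, hlt, hmin⟩, hadd, hsurj, hker, heq⟩ := h
  intro a ha
  have h1 := heq g ⟨a, ha⟩ ⟨_, hA.conj_mem a ha g⟩ rfl
  rw [hg, Module.End.one_apply] at h1
  have h2 := hadd ⟨a, ha⟩ ⟨a, ha⟩⁻¹
  rw [mul_inv_cancel, (hker 1).2 B.one_mem, ← h1, ← hadd, eq_comm, hker] at h2
  exact h2

theorem IsChiefFactorMap.eq_one {p : ℕ} {G V : Type} [Group G] [AddCommGroup V]
    [Module (ZMod p) V] {ρ : Representation (ZMod p) G V} {A B : Subgroup G} {φ : A → V}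
    (h : IsChiefFactorMap p A B ρ φ) (g : G) (hg : ∀ a ∈ A, g * a = a * g) : ρ g = 1 := by
  obtain ⟨-, hadd, hsurj, hker, heq⟩ := h
  ext v
  obtain ⟨a, rfl⟩ := hsurj v
  rw [← heq g a a (by rw [hg a a.2, mul_inv_cancel_right])]
  rfl

theorem IsChiefFactorMap.prime_eq {p q : ℕ} (hp : p.Prime) (hq : q.Prime) {G V : Type} [Group G]
    [AddCommGroup V] [Module (ZMod p) V] {ρ : Representation (ZMod p) G V} {A B : Subgroup G}
    {φ : A → V} (h : IsChiefFactorMap p A B ρ φ) (hpow : ∀ a ∈ A, a ^ q ∈ B) : p = q := by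
  have hnt := h.irreducible.1
  obtain ⟨-, hadd, hsurj, hker, heq⟩ := h
  by_contra hne
  obtain ⟨v, hv⟩ := exists_ne (0 : V)
  obtain ⟨a, rfl⟩ := hsurj v
  have hn : ∀ n : ℕ, φ (a ^ n) = n • φ a := by
    intro n
    induction n with
    | zero => simpa using (hker 1).2 B.one_mem
    | succ n ih => rw [pow_succ, hadd, ih, succ_nsmul]
  have h1 : q • φ a = 0 := by
    rw [← hn, hker]
    exact hpow a a.2
  have h2 : p • φ a = 0 := by
    rw [← Nat.cast_smul_eq_nsmul (ZMod p)]
    simp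
  have h3 : (1 : ℕ) • φ a = 0 := by
    rw [← ((Nat.coprime_primes hp hq).2 hne).gcd_eq_one]
    rw [← addOrderOf_dvd_iff_nsmul_eq_zero] at h1 h2 ⊢
    exact Nat.dvd_gcd h2 h1
  rw [one_nsmul] at h3
  exact hv h3

theorem exists_rep_of_action (p : ℕ) {G V : Type} [Group G] [AddCommGroup V] [Module (ZMod p) V]
    (f : G → V →+ V) (h1 : ∀ v, f 1 v = v) (hmul : ∀ g g' v, f (g * g') v = f g (f g' v)) :
    ∃ ρ : Representation (ZMod p) G V, ∀ g v, ρ g v = f g v :=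
  ⟨⟨⟨fun g => AddMonoidHom.toZModLinearMap p (f g), LinearMap.ext h1⟩,
    fun g g' => LinearMap.ext (hmul g g')⟩, fun _ _ => rfl⟩

theorem exists_module_of_comm (p : ℕ) (N : Type) [CommGroup N] (hN : ∀ a : N, a ^ p = 1) :
    ∃ (W : Type) (_ : AddCommGroup W) (_ : Module (ZMod p) W) (e : N ≃ W),
      ∀ a b, e (a * b) = e a + e b :=
  ⟨Additive N, inferInstance, AddCommGroup.zmodModule (n := p) (G := Additive N) hN,
    Additive.ofMul, fun _ _ => rfl⟩

/-- A minimal normal subgroup of exponent `p` as a module. -/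
theorem exists_chief_map {p : ℕ} {G : Type} [Group G] {A : Subgroup G}
    (hA : IsMinimalNormalSubgroup G A) (hAp : ∀ a ∈ A, a ^ p = 1)
    (hab : ∀ a ∈ A, ∀ b ∈ A, a * b = b * a) :
    ∃ (M : RepB p G) (φ : A → M.V), IsChiefFactorMap p A ⊥ M.ρ φ := by
  have hAn := hA.1
  obtain ⟨W, i1, i2, e, he⟩ := @exists_module_of_comm p A { (inferInstance : Group A) with
    mul_comm := fun a b => Subtype.ext (hab a a.2 b b.2) } (fun a => Subtype.ext (hAp a a.2))
  replace he : ∀ a b : A, e (a * b) = e a + e b := he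
  have he1 : e 1 = 0 := by simpa using he 1 1
  obtain ⟨ρ, hρ⟩ := exists_rep_of_action p (G := G) (V := W)
    (fun g => AddMonoidHom.mk' (fun w => e (MulAut.conjNormal g (e.symm w))) (fun v w => by
      rw [← he, ← map_mul]
      congr 2
      apply e.injective
      rw [he]
      simp))
    (fun v => by simp)
    (fun g g' v => by simp)
  refine ⟨⟨W, ρ⟩, e, chief_bot.2 hA, he, e.surjective, fun a => ?_, fun g a a' h => ?_⟩
  · rw [Subgroup.mem_bot, ← he1, e.apply_eq_iff_eq]
    exact ⟨fun h => congrArg Subtype.val h, fun h => Subtype.ext h⟩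
  · rw [hρ]
    change e a' = e (MulAut.conjNormal g (e.symm (e a)))
    congr 1
    ext
    rw [h]
    simp

/-- Chief factors of `G` above the kernel of a surjection `π` are `X`-central if their images
are. -/
theorem xcentral_lift {X : GrpB → Prop} {G Q : Type} [Group G] [Group Q] (π : G →* Q)
    (hπ : Function.Surjective π) {R S : Subgroup G} (h : IsChiefFactor G R S) (hS : π.ker ≤ S)
    (hX : IsXCentral X Q (R.map π) (S.map π)) : IsXCentral X G R S := by
  obtain ⟨-, p, hp, M, φ, ⟨-, hadd, hsurj, hker, heq⟩, H, hH, hs⟩ := hX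
  refine ⟨h, p, hp, ⟨M.V, M.ρ.comp π⟩,
    fun r => φ ⟨π r, Subgroup.mem_map_of_mem _ r.2⟩, ⟨h, ?_, ?_, ?_, ?_⟩, H, hH, ?_⟩
  · intro a b
    rw [← hadd]
    simp
  · intro v
    obtain ⟨⟨_, a, ha, rfl⟩, rfl⟩ := hsurj v
    exact ⟨⟨a, ha⟩, rfl⟩
  · intro a
    rw [hker]
    change π a ∈ S.map π ↔ _
    rw [← Subgroup.mem_comap, Subgroup.comap_map_eq_self hS]
  · intro g a a' e
    exact heq (π g) _ _ (by simp [e])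
  · refine split_pullback π (fun g => rfl) (fun l => ?_) hs
    obtain ⟨g, rfl⟩ := hπ l
    exact ⟨g, rfl⟩

/-! ### Matrix coefficients and good submodules -/

/-- The right regular representation of `G` on the `ZMod p`-valued functions. -/
def regRep (p : ℕ) (G : Type) [Group G] : Representation (ZMod p) G (G → ZMod p) :=
  MonoidHom.mk (OneHom.mk (fun g => LinearMap.funLeft (ZMod p) (ZMod p) (fun x => x * g))
    (by ext; simp [LinearMap.funLeft]))
    (fun g g' => LinearMap.ext fun f => funext fun x => by
      simp [LinearMap.funLeft, mul_assoc])

theorem regRep_apply {p : ℕ} {G : Type} [Group G] (g : G) (f : G → ZMod p) (x : G) :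
    regRep p G g f x = f (x * g) := rfl

theorem regRep_mul {p : ℕ} {G : Type} [Group G] (g : G) (f f' : G → ZMod p) :
    regRep p G g (f * f') = regRep p G g f * regRep p G g f' := rfl

/-- The matrix coefficients of a representation with respect to a linear form `l`. -/
def coef {p : ℕ} {G V : Type} [Group G] [AddCommGroup V] [Module (ZMod p) V]
    (ρ : Representation (ZMod p) G V) (l : V →ₗ[ZMod p] ZMod p) : V →ₗ[ZMod p] (G → ZMod p) :=
  LinearMap.pi fun x => l ∘ₗ ρ x

theorem coef_apply {p : ℕ} {G V : Type} [Group G] [AddCommGroup V] [Module (ZMod p) V]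
    (ρ : Representation (ZMod p) G V) (l : V →ₗ[ZMod p] ZMod p) (v : V) (x : G) :
    coef ρ l v x = l (ρ x v) := rfl

theorem coef_equivariant {p : ℕ} {G V : Type} [Group G] [AddCommGroup V] [Module (ZMod p) V]
    (ρ : Representation (ZMod p) G V) (l : V →ₗ[ZMod p] ZMod p) (g : G) (v : V) :
    coef ρ l (ρ g v) = regRep p G g (coef ρ l v) := by
  ext x
  rw [coef_apply, regRep_apply, coef_apply, map_mul]
  rfl

/-- Sections `S'/S` of a representation are representations. -/
theorem exists_section_rep {p : ℕ} {G X : Type} [Group G] [AddCommGroup X] [Module (ZMod p) X]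
    (τ : Representation (ZMod p) G X) (S S' : Submodule (ZMod p) X)
    (hS : ∀ g, ∀ v ∈ S, τ g v ∈ S) (hS' : ∀ g, ∀ v ∈ S', τ g v ∈ S') :
    ∃ (M : RepB p G) (ψ : S' →ₗ[ZMod p] M.V), Function.Surjective ψ ∧
      (∀ t : S', ψ t = 0 ↔ (t : X) ∈ S) ∧
      (∀ (g : G) (t t' : S'), (t' : X) = τ g (t : X) → ψ t' = M.ρ g (ψ t)) := by
  let N : Submodule (ZMod p) S' := S.comap S'.subtype
  let f : G → (S' ⧸ N) →ₗ[ZMod p] (S' ⧸ N) := fun g =>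
    N.mapQ N ((τ g).restrict (hS' g)) (fun v hv => hS g _ hv)
  have hf : ∀ g (t : S'), f g (N.mkQ t) = N.mkQ ⟨τ g t, hS' g t t.2⟩ := fun g t => rfl
  obtain ⟨ρ, hρ⟩ := exists_rep_of_action p (fun g => (f g).toAddMonoidHom)
    (fun v => by
      obtain ⟨t, rfl⟩ := N.mkQ_surjective v
      rw [LinearMap.toAddMonoidHom_coe]
      rw [hf]
      congr 1
      ext
      simp)
    (fun g g' v => by
      obtain ⟨t, rfl⟩ := N.mkQ_surjective v
      rw [LinearMap.toAddMonoidHom_coe, LinearMap.toAddMonoidHom_coe, LinearMap.toAddMonoidHom_coe]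
      rw [hf, hf, hf]
      congr 1
      ext
      simp)
  refine ⟨⟨S' ⧸ N, ρ⟩, N.mkQ, N.mkQ_surjective, fun t => ?_, fun g t t' e => ?_⟩
  · rw [Submodule.mkQ_apply, Submodule.Quotient.mk_eq_zero]
    rfl
  · rw [hρ]
    change _ = f g (N.mkQ t)
    rw [hf]
    congr 1
    exact Subtype.ext e

/-- Submodules of the function space with a filtration whose factors satisfy `Pr`. -/
inductive Good {p : ℕ} {G : Type} [Group G] (Pr : RepB p G → Prop) :
    Submodule (ZMod p) (G → ZMod p) → Prop
  | bot : Good Pr ⊥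
  | step (S S' : Submodule (ZMod p) (G → ZMod p)) (M : RepB p G) (ψ : S' →ₗ[ZMod p] M.V) :
    Good Pr S → S ≤ S' → (∀ g, ∀ f ∈ S', regRep p G g f ∈ S') → Pr M → Function.Surjective ψ →
    (∀ t : S', ψ t = 0 ↔ (t : G → ZMod p) ∈ S) →
    (∀ (g : G) (t t' : S'), (t' : G → ZMod p) = regRep p G g t → ψ t' = M.ρ g (ψ t)) →
    Good Pr S'

theorem Good.stable {p : ℕ} {G : Type} [Group G] {Pr : RepB p G → Prop}
    {S : Submodule (ZMod p) (G → ZMod p)} (h : Good Pr S) :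
    ∀ g, ∀ f ∈ S, regRep p G g f ∈ S := by
  cases h with
  | bot =>
    intro g f hf
    rw [Submodule.mem_bot] at hf ⊢
    rw [hf, map_zero]
  | step S S' M ψ _ _ h => exact h

/-- A maximal good submodule `𝒜` contains the image of every equivariant map modulo `𝒜` from a
module all of whose composition factors satisfy `Pr`. -/
theorem absorb {p : ℕ} {G Y : Type} [Group G] [Finite G] [NeZero p] {Pr : RepB p G → Prop}
    {𝒜 : Submodule (ZMod p) (G → ZMod p)} (hA : Maximal (Good Pr) 𝒜)
    [AddCommGroup Y] [Module (ZMod p) Y] (τ : Representation (ZMod p) G Y)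
    (hY : ∀ M : RepB p G, IsCompositionFactorOf M.ρ τ → Pr M)
    (Θ : Y →ₗ[ZMod p] (G → ZMod p))
    (hΘ : ∀ g y, Θ (τ g y) - regRep p G g (Θ y) ∈ 𝒜) : ∀ y, Θ y ∈ 𝒜 := by
  have hAs := hA.prop.stable
  by_contra hcon
  push Not at hcon
  obtain ⟨y₀, hy₀⟩ := hcon
  let U := LinearMap.range Θ ⊔ 𝒜
  have hU : ∀ g, ∀ f ∈ U, regRep p G g f ∈ U := by
    intro g f hf
    obtain ⟨_, ⟨y, rfl⟩, a, ha, rfl⟩ := Submodule.mem_sup.1 hf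
    rw [map_add]
    refine U.add_mem ?_ (Submodule.mem_sup_right (hAs g a ha))
    have h1 : Θ (τ g y) ∈ U := Submodule.mem_sup_left ⟨_, rfl⟩
    have := U.sub_mem h1 (Submodule.mem_sup_right (hΘ g y))
    simpa using this
  have hAU : 𝒜 < U := by
    refine lt_of_le_of_ne le_sup_right fun e => hy₀ ?_
    rw [e]
    exact Submodule.mem_sup_left ⟨_, rfl⟩
  obtain ⟨S', hS'⟩ := Set.Finite.exists_minimal
    (s := {S : Submodule (ZMod p) (G → ZMod p) |
      (∀ g, ∀ f ∈ S, regRep p G g f ∈ S) ∧ 𝒜 < S ∧ S ≤ U}) (Set.toFinite _) ⟨U, hU, hAU, le_rfl⟩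
  obtain ⟨hst, hlt, hle⟩ := hS'.prop
  obtain ⟨M, ψ, hψ, hψk, hψe⟩ := exists_section_rep (regRep p G) 𝒜 S' hAs hst
  have hirr : IsIrreducibleRep M.ρ := by
    constructor
    · obtain ⟨f, hf, hfA⟩ := SetLike.exists_of_lt hlt
      exact ⟨ψ ⟨f, hf⟩, 0, fun e => hfA ((hψk _).1 e)⟩
    · intro W hW
      let W' : Submodule (ZMod p) (G → ZMod p) := (W.comap ψ).map S'.subtype
      have hW' : ∀ t : S', (t : G → ZMod p) ∈ W' ↔ ψ t ∈ W := by
        intro t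
        simp [W']
      have hW'S : W' ≤ S' := Submodule.map_subtype_le _ _
      have hAW : 𝒜 ≤ W' := fun f hf => (hW' ⟨f, hlt.le hf⟩).2 (by
        rw [(hψk ⟨f, hlt.le hf⟩).2 hf]; exact W.zero_mem)
      have hW's : ∀ g, ∀ f ∈ W', regRep p G g f ∈ W' := by
        intro g f hf
        have hfS := hW'S hf
        refine (hW' ⟨_, hst g f hfS⟩).2 ?_
        rw [hψe g ⟨f, hfS⟩ ⟨_, hst g f hfS⟩ rfl]
        exact hW g _ ((hW' ⟨f, hfS⟩).1 hf)
      rcases hAW.eq_or_lt with e | e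
      · left
        rw [eq_bot_iff]
        intro m hm
        obtain ⟨t, rfl⟩ := hψ m
        rw [← hW', ← e, ← hψk] at hm
        exact hm
      · right
        rw [eq_top_iff]
        intro m _
        obtain ⟨t, rfl⟩ := hψ m
        rw [← hW']
        exact hS'.le_of_le ⟨hW's, e, hW'S.trans hle⟩ hW'S t.2
  have hcf : IsCompositionFactorOf M.ρ τ := by
    refine ⟨hirr, S'.comap Θ, 𝒜.comap Θ, ?_, ?_, Submodule.comap_mono hlt.le,
      ψ ∘ₗ Θ.restrict (fun y hy => hy), ?_, ?_, ?_⟩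
    · intro g y hy
      have := S'.add_mem (hlt.le (hΘ g y)) (hst g _ hy)
      simpa using this
    · intro g y hy
      have := 𝒜.add_mem (hΘ g y) (hAs g _ hy)
      simpa using this
    · intro m
      obtain ⟨⟨t, ht⟩, rfl⟩ := hψ m
      obtain ⟨_, ⟨y, rfl⟩, a, ha, e⟩ := Submodule.mem_sup.1 (hle ht)
      have hy : Θ y ∈ S' := by
        have := S'.sub_mem ht (hlt.le ha)
        rwa [← e, add_sub_cancel_right] at this
      refine ⟨⟨y, hy⟩, ?_⟩
      rw [← sub_eq_zero]
      change ψ ⟨Θ y, hy⟩ - _ = 0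
      rw [← map_sub, hψk]
      change Θ y - t ∈ 𝒜
      rw [← e, sub_add_cancel_left]
      exact 𝒜.neg_mem ha
    · intro t
      exact hψk _
    · rintro g ⟨t, ht⟩ ⟨_, ht'⟩ rfl
      change Θ (τ g t) ∈ S' at ht'
      change ψ ⟨Θ (τ g t), ht'⟩ = M.ρ g (ψ ⟨Θ t, ht⟩)
      rw [← hψe g ⟨Θ t, ht⟩ ⟨_, hst g _ ht⟩ rfl, ← sub_eq_zero, ← map_sub, hψk]
      exact hΘ g t
  exact hlt.not_ge (hA.le_of_ge (Good.step 𝒜 S' M ψ hA.prop hlt.le hst (hY M hcf) hψ hψk hψe)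
    hlt.le)

/-! ### Tensor closed families of representations -/

/-- Equivariant maps between irreducible representations are zero or bijective. -/
theorem schur {p : ℕ} {G V W : Type} [Group G] [AddCommGroup V] [Module (ZMod p) V]
    [AddCommGroup W] [Module (ZMod p) W] {ρ : Representation (ZMod p) G V}
    {σ : Representation (ZMod p) G W} (hρ : IsIrreducibleRep ρ) (hσ : IsIrreducibleRep σ)
    (f : V →ₗ[ZMod p] W) (hf : ∀ g v, f (ρ g v) = σ g (f v)) :
    f = 0 ∨ Function.Bijective f := by
  rcases hρ.2 (LinearMap.ker f) (fun g v hv => by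
    rw [LinearMap.mem_ker] at hv ⊢
    rw [hf, hv, map_zero]) with h | h
  · rcases hσ.2 (LinearMap.range f) (by
      rintro g _ ⟨v, rfl⟩
      exact ⟨ρ g v, hf g v⟩) with h' | h'
    · exact Or.inl (LinearMap.range_eq_bot.1 h')
    · exact Or.inr ⟨LinearMap.ker_eq_bot.1 h, LinearMap.range_eq_top.1 h'⟩
  · exact Or.inl (LinearMap.ker_eq_top.1 h)

section Steinberg

variable {p : ℕ} [Fact p.Prime] {G : Type} [Group G] {Pr : RepB p G → Prop}

/-- Matrix coefficients of representations in a tensor closed family lie in a maximal good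
submodule. -/
theorem coef_mem (hirr : ∀ W, Pr W → IsIrreducibleRep W.ρ)
    (hiso : ∀ (W W' : RepB p G) (e : W.V ≃ₗ[ZMod p] W'.V),
      (∀ g w, e (W.ρ g w) = W'.ρ g (e w)) → Pr W → Pr W') [Finite G]
    {𝒜 : Submodule (ZMod p) (G → ZMod p)} (hA : Maximal (Good Pr) 𝒜)
    (W : RepB p G) (hW : Pr W) (l : W.V →ₗ[ZMod p] ZMod p) (w : W.V) : coef W.ρ l w ∈ 𝒜 := by
  refine absorb hA W.ρ ?_ (coef W.ρ l) (fun g y => ?_) w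
  · rintro M ⟨hM, T, S, hT, hS, hST, ψ, hψ, hψk, hψe⟩
    have hnt := hM.1
    have hTt : T = ⊤ := by
      refine ((hirr W hW).2 T hT).resolve_left ?_
      rintro rfl
      obtain ⟨m, hm⟩ := exists_ne (0 : M.V)
      obtain ⟨t, rfl⟩ := hψ m
      apply hm
      rw [hψk, (Submodule.mem_bot _).1 t.2]
      exact S.zero_mem
    subst hTt
    have hSb : S = ⊥ := by
      refine ((hirr W hW).2 S hS).resolve_right ?_
      rintro rfl
      obtain ⟨m, hm⟩ := exists_ne (0 : M.V)
      obtain ⟨t, rfl⟩ := hψ m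
      exact hm ((hψk t).2 trivial)
    subst hSb
    let f : W.V →ₗ[ZMod p] M.V := ψ ∘ₗ Submodule.topEquiv.symm.toLinearMap
    have hψb : Function.Bijective ψ :=
      ⟨(injective_iff_map_eq_zero ψ).2 fun t ht => Subtype.ext ((hψk t).1 ht), hψ⟩
    have hf : Function.Bijective f := hψb.comp Submodule.topEquiv.symm.bijective
    exact hiso W M (LinearEquiv.ofBijective f hf) (fun g w => hψe g _ _ rfl) hW
  · rw [coef_equivariant, sub_self]
    exact 𝒜.zero_mem

/-- A maximal good submodule contains the product of a good submodule with the matrix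
coefficients of the family, by tensor closure and induction along the filtration. -/
theorem mul_coef_mem
    (hten : ∀ W W' M : RepB p G, Pr W → Pr W' →
      IsCompositionFactorOf M.ρ (Representation.tprod W.ρ W'.ρ) → Pr M) [Finite G]
    {𝒜 : Submodule (ZMod p) (G → ZMod p)} (hA : Maximal (Good Pr) 𝒜)
    (W : RepB p G) (hW : Pr W) (l : W.V →ₗ[ZMod p] ZMod p)
    {S : Submodule (ZMod p) (G → ZMod p)} (hS : Good Pr S) :
    ∀ f ∈ S, ∀ w : W.V, f * coef W.ρ l w ∈ 𝒜 := by
  induction hS with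
  | bot =>
    intro f hf w
    rw [(Submodule.mem_bot _).1 hf, zero_mul]
    exact 𝒜.zero_mem
  | step S S' M ψ hS hSS hst hM hψ hψk hψe ih =>
    obtain ⟨s, hs⟩ := ψ.exists_rightInverse_of_surjective (LinearMap.range_eq_top.2 hψ)
    have hs' : ∀ m, ψ (s m) = m := fun m => LinearMap.congr_fun hs m
    let Θ : M.V ⊗[ZMod p] W.V →ₗ[ZMod p] (G → ZMod p) :=
      TensorProduct.lift ((LinearMap.mul (ZMod p) (G → ZMod p)).compl₁₂
        (S'.subtype ∘ₗ s) (coef W.ρ l))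
    have hΘ : ∀ m w, Θ (m ⊗ₜ w) = (s m : G → ZMod p) * coef W.ρ l w := fun m w => by
      simp [Θ]
    have key : ∀ y, Θ y ∈ 𝒜 := by
      refine absorb hA (Representation.tprod M.ρ W.ρ) (fun N hN => hten M W N hM hW hN) Θ ?_
      intro g y
      induction y with
      | zero => simp
      | add x y hx hy =>
        have := 𝒜.add_mem hx hy
        rw [map_add, map_add, map_add, map_add]
        convert this using 1
        abel
      | tmul m w =>
        rw [Representation.tprod_apply, TensorProduct.map_tmul, hΘ, hΘ, coef_equivariant,
          regRep_mul, ← sub_mul, ← coef_equivariant]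
        refine ih _ ?_ _
        have h1 := hψe g (s m) ⟨_, hst g _ (s m).2⟩ rfl
        rw [hs', ← hs' (M.ρ g m), eq_comm, ← sub_eq_zero, ← map_sub, hψk] at h1
        exact h1
    intro f hf w
    have h1 : f - s (ψ ⟨f, hf⟩) ∈ S := by
      have : ψ (⟨f, hf⟩ - s (ψ ⟨f, hf⟩)) = 0 := by rw [map_sub, hs', sub_self]
      rw [hψk] at this
      exact this
    have h2 := 𝒜.add_mem (ih _ h1 w) (key (ψ ⟨f, hf⟩ ⊗ₜ w))
    rw [hΘ, ← add_mul, sub_add_cancel] at h2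
    exact h2

/-- A maximal good submodule contains all functions on `G` which are constant on the cosets of
the common kernel of the representations in the family. -/
theorem invariant_mem (hirr : ∀ W, Pr W → IsIrreducibleRep W.ρ)
    (hiso : ∀ (W W' : RepB p G) (e : W.V ≃ₗ[ZMod p] W'.V),
      (∀ g w, e (W.ρ g w) = W'.ρ g (e w)) → Pr W → Pr W')
    (hten : ∀ W W' M : RepB p G, Pr W → Pr W' →
      IsCompositionFactorOf M.ρ (Representation.tprod W.ρ W'.ρ) → Pr M)
    (hne : ∃ W, Pr W) [Finite G]
    {𝒜 : Submodule (ZMod p) (G → ZMod p)} (hA : Maximal (Good Pr) 𝒜)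
    (f : G → ZMod p) (hf : ∀ x y, (∀ W, Pr W → W.ρ x = W.ρ y) → f x = f y) : f ∈ 𝒜 := by
  classical
  have := Fintype.ofFinite G
  -- The multipliers of `𝒜` that are constant on cosets form an algebra containing the matrix
  -- coefficients, which separate the cosets.
  let 𝒟 : Subalgebra (ZMod p) (G → ZMod p) :=
    { carrier := {d | (∀ a ∈ 𝒜, d * a ∈ 𝒜) ∧
        ∀ x y, (∀ W, Pr W → W.ρ x = W.ρ y) → d x = d y}
      mul_mem' := by
        rintro a b ⟨ha, ha'⟩ ⟨hb, hb'⟩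
        refine ⟨fun c hc => ?_, fun x y h => ?_⟩
        · rw [mul_assoc]; exact ha _ (hb _ hc)
        · rw [Pi.mul_apply, Pi.mul_apply, ha' x y h, hb' x y h]
      add_mem' := by
        rintro a b ⟨ha, ha'⟩ ⟨hb, hb'⟩
        refine ⟨fun c hc => ?_, fun x y h => ?_⟩
        · rw [add_mul]; exact 𝒜.add_mem (ha _ hc) (hb _ hc)
        · rw [Pi.add_apply, Pi.add_apply, ha' x y h, hb' x y h]
      algebraMap_mem' := by
        intro r
        refine ⟨fun c hc => ?_, fun x y h => rfl⟩
        rw [← Algebra.smul_def]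
        exact 𝒜.smul_mem r hc }
  have hcoef : ∀ (W : RepB p G) (l : W.V →ₗ[ZMod p] ZMod p) (w : W.V), Pr W →
      coef W.ρ l w ∈ 𝒟 := by
    intro W l w hW
    refine ⟨fun a ha => ?_, fun x y h => ?_⟩
    · rw [mul_comm]
      exact mul_coef_mem hten hA W hW l hA.prop a ha w
    · rw [coef_apply, coef_apply, h W hW]
  have hsep : ∀ y y' : G, ∃ d ∈ 𝒟, d y = 1 ∧ ((∀ W, Pr W → W.ρ y = W.ρ y') ∨ d y' = 0) := by
    intro y y'
    by_cases h : ∀ W, Pr W → W.ρ y = W.ρ y'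
    · exact ⟨1, 𝒟.one_mem, rfl, Or.inl h⟩
    · push Not at h
      obtain ⟨W, hW, hyy⟩ := h
      obtain ⟨w, hw⟩ : ∃ w, W.ρ y w - W.ρ y' w ≠ 0 := by
        by_contra hcon
        push Not at hcon
        exact hyy (LinearMap.ext fun w => sub_eq_zero.1 (hcon w))
      obtain ⟨l, hl⟩ : ∃ l : Module.Dual (ZMod p) W.V, l (W.ρ y w - W.ρ y' w) ≠ 0 := by
        by_contra hcon
        push Not at hcon
        exact hw ((Module.forall_dual_apply_eq_zero_iff (ZMod p) _).1 hcon)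
      rw [map_sub] at hl
      refine ⟨(l (W.ρ y w) - l (W.ρ y' w))⁻¹ •
        (coef W.ρ l w - algebraMap (ZMod p) (G → ZMod p) (l (W.ρ y' w))),
        𝒟.smul_mem (𝒟.sub_mem (hcoef W l w hW) (𝒟.algebraMap_mem _)) _, ?_, Or.inr ?_⟩
      · simp [coef_apply, hl]
      · simp [coef_apply]
  choose d hd𝒟 hd1 hd0 using hsep
  obtain ⟨W, hW⟩ := hne
  have hnt := (hirr W hW).1
  -- The constant function `1` need not lie in `𝒜`, so the indicator functions of cosets are
  -- obtained as multiples of a matrix coefficient.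
  have hdelta : ∀ y : G, ∃ e ∈ 𝒜, e y = 1 ∧
      (∀ x x', (∀ W, Pr W → W.ρ x = W.ρ x') → e x = e x') ∧
      ∀ y', (∀ W, Pr W → W.ρ y = W.ρ y') ∨ e y' = 0 := by
    intro y
    obtain ⟨w, hw⟩ := exists_ne (0 : W.V)
    obtain ⟨l, hl⟩ : ∃ l : Module.Dual (ZMod p) W.V, l w ≠ 0 := by
      by_contra hcon
      push Not at hcon
      exact hw ((Module.forall_dual_apply_eq_zero_iff (ZMod p) _).1 hcon)
    have hP : (∏ y', d y y') ∈ 𝒟 := 𝒟.prod_mem fun y' _ => hd𝒟 y y'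
    have hc := hcoef W l (W.ρ y⁻¹ w) hW
    refine ⟨(l w)⁻¹ • ((∏ y', d y y') * coef W.ρ l (W.ρ y⁻¹ w)),
      𝒜.smul_mem _ (hP.1 _ (coef_mem hirr hiso hA W hW l _)), ?_, ?_, ?_⟩
    · have : W.ρ y (W.ρ y⁻¹ w) = w := by
        rw [← Module.End.mul_apply, ← map_mul]; simp
      simp [coef_apply, this, hd1, hl]
    · intro x x' h
      have h1 := (𝒟.smul_mem (𝒟.mul_mem hP hc) (l w)⁻¹).2 x x' h
      exact h1
    · intro y'
      refine (hd0 y y').imp_right fun h0 => ?_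
      have : (∏ z, d y z) y' = 0 := by
        rw [Finset.prod_apply]
        exact Finset.prod_eq_zero (Finset.mem_univ y') h0
      simp [this]
  choose e heA he1 heinv he0 using hdelta
  let st : Setoid G :=
    { r := fun x y => ∀ W, Pr W → W.ρ x = W.ρ y
      iseqv := ⟨fun _ _ _ => rfl, fun h W hW => (h W hW).symm,
        fun h h' W hW => (h W hW).trans (h' W hW)⟩ }
  have hq : ∀ x : G, ∀ W, Pr W → W.ρ (Quotient.mk st x).out = W.ρ x := fun x =>
    Quotient.exact (Quotient.out_eq (Quotient.mk st x))
  have hfe : f = ∑ q : Quotient st, f q.out • e q.out := by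
    ext x
    rw [Finset.sum_apply, Finset.sum_eq_single (Quotient.mk st x)]
    · rw [Pi.smul_apply, ← heinv _ _ _ (hq x), he1, smul_eq_mul, mul_one]
      exact (hf _ _ (hq x)).symm
    · intro q _ hqx
      rcases he0 q.out x with h | h
      · exfalso
        apply hqx
        rw [← q.out_eq]
        exact Quotient.sound h
      · rw [Pi.smul_apply, h, smul_zero]
    · intro h
      exact absurd (Finset.mem_univ _) h
  rw [hfe]
  exact 𝒜.sum_mem fun q _ => 𝒜.smul_mem _ (heA _)

/-- An analogue of the theorem of Burnside, Brauer and Steinberg: a family of irreducible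
representations which is closed under composition factors of tensor products contains all
irreducible representations on which the common kernel of the family acts trivially.

Such a representation embeds by its matrix coefficients into a maximal good submodule of the
functions on `G`, so it is isomorphic to a factor of the filtration. -/
theorem steinberg (hirr : ∀ W, Pr W → IsIrreducibleRep W.ρ)
    (hiso : ∀ (W W' : RepB p G) (e : W.V ≃ₗ[ZMod p] W'.V),
      (∀ g w, e (W.ρ g w) = W'.ρ g (e w)) → Pr W → Pr W')
    (hten : ∀ W W' M : RepB p G, Pr W → Pr W' →
      IsCompositionFactorOf M.ρ (Representation.tprod W.ρ W'.ρ) → Pr M)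
    (hne : ∃ W, Pr W) [Finite G] (V : RepB p G) (hV : IsIrreducibleRep V.ρ)
    (hker : ∀ g, (∀ W, Pr W → W.ρ g = 1) → V.ρ g = 1) : Pr V := by
  obtain ⟨𝒜, hA⟩ := Set.Finite.exists_maximal (s := {S | Good Pr S}) (Set.toFinite _)
    ⟨⊥, Good.bot⟩
  have hnt := hV.1
  obtain ⟨v, hv⟩ := exists_ne (0 : V.V)
  obtain ⟨l, hl⟩ : ∃ l : Module.Dual (ZMod p) V.V, l v ≠ 0 := by
    by_contra hcon
    push Not at hcon
    exact hv ((Module.forall_dual_apply_eq_zero_iff (ZMod p) _).1 hcon)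
  have hmem : ∀ u, coef V.ρ l u ∈ 𝒜 := by
    intro u
    refine invariant_mem hirr hiso hten hne hA _ fun x y h => ?_
    have h1 : V.ρ (x * y⁻¹) = 1 := hker _ fun W hW => by
      rw [map_mul, h W hW, ← map_mul, mul_inv_cancel, map_one]
    have h2 : V.ρ x = V.ρ y := by
      rw [← one_mul (V.ρ y), ← h1, ← map_mul, inv_mul_cancel_right]
    rw [coef_apply, coef_apply, h2]
  have hne0 : coef V.ρ l ≠ 0 := by
    intro h
    have h1 := congrFun (LinearMap.congr_fun h v) 1
    rw [coef_apply, map_one] at h1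
    exact hl h1
  have main : ∀ S, Good Pr S → (∀ u, coef V.ρ l u ∈ S) → Pr V := by
    intro S hS
    induction hS with
    | bot =>
      intro h
      exact absurd (LinearMap.ext fun u => (Submodule.mem_bot _).1 (h u)) hne0
    | step S S' M ψ hS hSS hst hM hψ hψk hψe ih =>
      intro h
      let f : V.V →ₗ[ZMod p] M.V := ψ ∘ₗ (coef V.ρ l).codRestrict S' h
      have hf : ∀ g u, f (V.ρ g u) = M.ρ g (f u) := fun g u =>
        hψe g _ _ (coef_equivariant V.ρ l g u)
      rcases schur hV (hirr M hM) f hf with h0 | hb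
      · refine ih fun u => ?_
        have := LinearMap.congr_fun h0 u
        exact (hψk _).1 this
      · let e := LinearEquiv.ofBijective f hb
        refine hiso M V e.symm (fun g m => ?_) hM
        obtain ⟨u, rfl⟩ := hb.2 m
        have h1 : e.symm (f u) = u := e.symm_apply_apply u
        rw [h1, ← hf]
        exact e.symm_apply_apply _
  exact main 𝒜 hA.prop hmem

end Steinberg

/-! ### The two classes coincide -/

/-- A nontrivial normal subgroup of a primitive group contains the socle. -/
theorem socle_le {P : Type} [Group P] {K T : Subgroup P} (hK : IsMinimalNormalSubgroup P K)
    (hC : Subgroup.centralizer (K : Set P) = K) (hT : T.Normal) (hT1 : T ≠ ⊥) : K ≤ T := by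
  have hKn := hK.1
  rcases hK.2.2 (K ⊓ T) inferInstance inf_le_left with h | h
  · exfalso
    have h1 : T ≤ K := by
      rw [← hC]
      intro t ht
      rw [Subgroup.mem_centralizer_iff]
      intro k hk
      exact Subgroup.commute_of_normal_of_disjoint K T hKn hT (disjoint_iff.2 h) k t hk ht
    rw [inf_eq_right.2 h1] at h
    exact hT1 h
  · exact inf_eq_left.1 h

theorem chief_comap {G P : Type} [Group G] [Group P] (π : G →* P) (hπ : Function.Surjective π)
    {K : Subgroup P} (hK : IsMinimalNormalSubgroup P K) :
    IsChiefFactor G (K.comap π) π.ker := by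
  obtain ⟨hKn, hK1, hmin⟩ := hK
  have hle : π.ker ≤ K.comap π := by
    rw [← MonoidHom.comap_bot]; exact Subgroup.comap_mono bot_le
  refine ⟨hKn.comap π, inferInstance, lt_of_le_of_ne hle fun h => hK1 ?_, ?_⟩
  · rw [← Subgroup.map_comap_eq_self_of_surjective hπ K, ← h, Subgroup.map_eq_bot_iff]
  · intro N hN h1 h2
    have h3 : N.map π ≤ K := Subgroup.map_le_iff_le_comap.2 h2
    rw [← Subgroup.comap_map_eq_self h1]
    rcases hmin _ (hN.map π hπ) h3 with h | h
    · left; rw [h, MonoidHom.comap_bot]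
    · right; rw [h]

theorem h_quotient {H : GrpB → Prop}
    (hSchunck : ∀ G : GrpB, H G ↔ PdefClass (fun P => H P ∧ IsPrimitiveGroup P.carrier) G)
    {G Q : GrpB} (hG : H G) (π : G.carrier →* Q.carrier)
    (hπ : Function.Surjective π) : H Q := by
  obtain ⟨h1, (h2 : Group.IsSolvable G.carrier), h3⟩ := (hSchunck G).1 hG
  exact (hSchunck Q).2 ⟨Finite.of_surjective π hπ, Group.isSolvable_of_surjective hπ,
    fun P σ hσ hP => h3 P (σ.comp π) (hσ.comp hπ) hP⟩

/-- A complemented minimal normal subgroup of a group in `H` is central for the primitive groups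
in `H`: its split extension is a quotient of the group. -/
theorem xc_of_complemented {H : GrpB → Prop}
    (hSchunck : ∀ G : GrpB, H G ↔ PdefClass (fun P => H P ∧ IsPrimitiveGroup P.carrier) G)
    {G : GrpB} (hG : H G) {A : Subgroup G.carrier}
    (hA : IsMinimalNormalSubgroup G.carrier A) (hab : ∀ a ∈ A, ∀ b ∈ A, a * b = b * a)
    {p : ℕ} {V : Type} [AddCommGroup V] [Module (ZMod p) V]
    {ρ : Representation (ZMod p) G.carrier V} {φ : A → V} (hφ : IsChiefFactorMap p A ⊥ ρ φ)
    {M : Subgroup G.carrier} (h1 : A ⊓ M = ⊥) (h2 : A ⊔ M = ⊤) :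
    XC (fun P => H P ∧ IsPrimitiveGroup P.carrier) ρ := by
  obtain ⟨hfin, (hsol : Group.IsSolvable G.carrier), hprim⟩ := (hSchunck G).1 hG
  have hAn := hA.1
  let C := Subgroup.centralizer (A : Set G.carrier)
  let N := M ⊓ C
  have hdec : ∀ g : G.carrier, ∃ a ∈ A, ∃ m ∈ M, a * m = g := fun g => by
    rw [← Subgroup.mem_sup_of_normal_left, h2]; trivial
  have hNn : N.Normal := ⟨by
    rintro n ⟨hn, hn'⟩ g
    obtain ⟨a, ha, m, hm, rfl⟩ := hdec g
    have hC : m * n * m⁻¹ ∈ C := (inferInstance : C.Normal).conj_mem n hn' m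
    have : a * m * n * (a * m)⁻¹ = m * n * m⁻¹ := by
      have := Subgroup.mem_centralizer_iff.1 hC a ha
      calc a * m * n * (a * m)⁻¹ = (a * (m * n * m⁻¹)) * a⁻¹ := by group
        _ = m * n * m⁻¹ := by rw [this]; group
    rw [this]
    exact ⟨M.mul_mem (M.mul_mem hm hn) (M.inv_mem hm), hC⟩⟩
  have hAN : ∀ a ∈ A, a ∈ N → a = 1 := by
    intro a ha hn
    have : a ∈ A ⊓ M := ⟨ha, hn.1⟩
    rwa [h1, Subgroup.mem_bot] at this
  let π := QuotientGroup.mk' N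
  have hπ : Function.Surjective π := QuotientGroup.mk'_surjective N
  have hπ1 : ∀ g, π g = 1 ↔ g ∈ N := fun g => QuotientGroup.eq_one_iff g
  have hK : IsMinimalNormalSubgroup (G.carrier ⧸ N) (A.map π) := by
    refine ⟨hAn.map π hπ, fun h => hA.2.1 ?_, fun T hT hTA => ?_⟩
    · rw [Subgroup.map_eq_bot_iff] at h
      rw [eq_bot_iff]
      intro a ha
      have := h ha
      rw [MonoidHom.mem_ker, hπ1] at this
      exact Subgroup.mem_bot.2 (hAN a ha this)
    · have := hT.comap π
      rcases hA.2.2 (T.comap π ⊓ A) inferInstance inf_le_right with h | h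
      · left
        rw [eq_bot_iff]
        intro x hx
        obtain ⟨a, ha, rfl⟩ := hTA hx
        have : a ∈ T.comap π ⊓ A := ⟨hx, ha⟩
        rw [h, Subgroup.mem_bot] at this
        rw [this, map_one]
        exact Subgroup.one_mem _
      · right
        exact le_antisymm hTA (Subgroup.map_le_iff_le_comap.2 (inf_eq_right.1 h))
  have hC : Subgroup.centralizer ((A.map π : Subgroup _) : Set (G.carrier ⧸ N)) = A.map π := by
    ext x
    rw [Subgroup.mem_centralizer_iff]
    constructor
    · intro hx
      obtain ⟨g, rfl⟩ := hπ x
      have hg : g ∈ C := by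
        rw [Subgroup.mem_centralizer_iff]
        intro b hb
        have h3 := hx (π b) (Subgroup.mem_map_of_mem _ hb)
        rw [← map_mul, ← map_mul, ← mul_inv_eq_one, ← map_inv, ← map_mul, hπ1] at h3
        have h4 := hAN _ (by
          have := A.mul_mem hb (hAn.conj_mem _ (A.inv_mem hb) g)
          simpa [mul_assoc] using this) h3
        exact mul_inv_eq_one.1 h4
      obtain ⟨a, ha, m, hm, rfl⟩ := hdec g
      have haC : a ∈ C := Subgroup.mem_centralizer_iff.2 fun b hb => hab b hb a ha
      have hmN : m ∈ N := ⟨hm, (Subgroup.mul_mem_cancel_left C haC).1 hg⟩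
      rw [map_mul, (hπ1 m).2 hmN, mul_one]
      exact Subgroup.mem_map_of_mem _ ha
    · rintro ⟨a, ha, rfl⟩ _ ⟨b, hb, rfl⟩
      rw [← map_mul, ← map_mul, hab a ha b hb]
  refine ⟨⟨G.carrier ⧸ N⟩, hprim ⟨G.carrier ⧸ N⟩ π hπ ⟨_, hK, hC⟩, ?_⟩
  obtain ⟨-, hadd, hsurj, hker, heq⟩ := hφ
  have hsolQ : Group.IsSolvable (G.carrier ⧸ N) := Group.isSolvable_of_surjective hπ
  refine split_of_primitive (P := G.carrier ⧸ N) ρ π hπ hK hC A rfl φ hadd hsurj (fun a => ?_) heq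
  rw [hker, hπ1, Subgroup.mem_bot]
  exact ⟨fun h => by rw [h]; exact N.one_mem, fun h => hAN _ a.2 h⟩

/-- Central chief factors above a non-complemented minimal normal subgroup force it to be
central: the central modules are a tensor closed family, and the common kernel of this family
centralizes the minimal normal subgroup. -/
theorem xc_of_not_complemented {X : GrpB → Prop} (hX : SubtensorClosed X) {G : Type} [Group G]
    [Finite G] [Group.IsSolvable G] {p : ℕ} (hp : p.Prime) {A : Subgroup G}
    (hA : IsMinimalNormalSubgroup G A) (hAp : ∀ a ∈ A, a ^ p = 1)
    (hab : ∀ a ∈ A, ∀ b ∈ A, a * b = b * a) (M : RepB p G) {φ : A → M.V}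
    (hφ : IsChiefFactorMap p A ⊥ M.ρ φ) (hnc : ¬ ∃ M : Subgroup G, A ⊓ M = ⊥ ∧ A ⊔ M = ⊤)
    (hcen : ∀ R S, IsChiefFactor G R S → A ≤ S → IsXCentral X G R S) : XC X M.ρ := by
  have : Fact p.Prime := ⟨hp⟩
  have hAn := hA.1
  let Pr : RepB p G → Prop := fun W => IsIrreducibleRep W.ρ ∧ XC X W.ρ
  have hmod : ∀ R S, IsChiefFactor G R S → A ≤ S → (∀ r ∈ R, r ^ p ∈ S) →
      ∃ W : RepB p G, Pr W ∧ ∃ ψ : R → W.V, IsChiefFactorMap p R S W.ρ ψ := by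
    intro R S hRS hAS hpow
    obtain ⟨-, q, hq, W, ψ, hψ, hH⟩ := hcen R S hRS hAS
    obtain rfl := hψ.prime_eq hq hp hpow
    exact ⟨W, ⟨hψ.irreducible, hH⟩, ψ, hψ⟩
  have hne : ∃ W, Pr W := by
    rcases exists_p_chief hp A ⊤ le_top with h | ⟨R, S, hRS, hAS, -, hpow, -⟩
    · exfalso
      apply hnc
      obtain ⟨n, hn⟩ := card_pow hp A hAp
      rw [Subgroup.relIndex_top_right] at h
      obtain ⟨Q, hQ⟩ := Subgroup.exists_right_complement'_of_coprime (N := A) (by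
        rw [hn]; exact h.pow_left n)
      exact ⟨Q, hQ.disjoint.eq_bot, hQ.sup_eq_top⟩
    · obtain ⟨W, hW, -⟩ := hmod R S hRS hAS hpow
      exact ⟨W, hW⟩
  let K : Subgroup G :=
    { carrier := {g | ∀ W, Pr W → W.ρ g = 1}
      one_mem' := fun W _ => map_one _
      mul_mem' := fun {a b} ha hb W hW => by rw [map_mul, ha W hW, hb W hW, one_mul]
      inv_mem' := fun {a} ha W hW => by
        calc W.ρ a⁻¹ = W.ρ a⁻¹ * W.ρ a := by rw [ha W hW, mul_one]
          _ = 1 := by rw [← map_mul, inv_mul_cancel, map_one] }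
  have hKn : K.Normal := ⟨fun k hk g W hW => by
    rw [map_mul, map_mul, hk W hW, mul_one, ← map_mul, mul_inv_cancel, map_one]⟩
  have hKA := centralize_of_not_complemented hp hA hAp hab hnc K (by
    intro R S hRS hAS hpow k hk
    obtain ⟨W, hW, ψ, hψ⟩ := hmod R S hRS hAS hpow
    exact hψ.comm_mem k (hk W hW))
  refine (steinberg (Pr := Pr) (fun W hW => hW.1) ?_ ?_ hne M hφ.irreducible
    (fun g hg => hφ.eq_one g (hKA g hg))).2
  · rintro W W' e he ⟨⟨hnt, hirr⟩, E, hE, hs⟩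
    refine ⟨⟨e.symm.toEquiv.nontrivial, fun S hS => ?_⟩, E, hE, split_iso e.symm ?_ hs⟩
    · rcases hirr (S.comap e.toLinearMap) (fun g v hv => by
        rw [Submodule.mem_comap, LinearEquiv.coe_coe] at hv ⊢
        rw [he]
        exact hS g _ hv) with h | h
      · left
        rw [eq_bot_iff]
        intro w hw
        have : e.symm w ∈ S.comap e.toLinearMap := by simpa using hw
        rw [h, Submodule.mem_bot] at this
        simpa using this
      · right
        rw [eq_top_iff]
        intro w _
        have : e.symm w ∈ S.comap e.toLinearMap := by rw [h]; trivial
        simpa using this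
    · intro g w
      apply e.injective
      rw [he]
      simp
  · rintro W W' N ⟨h1, h1'⟩ ⟨h2, h2'⟩ hN
    exact ⟨hN.1, xc_tensor hX hp h1 h2 h1' h2' hN⟩

/-- All chief factors of a group `G` in `H` are central. By induction on the order of `G` this holds
for those above a minimal normal subgroup, which leaves the minimal normal subgroups themselves. -/
theorem xcentral_of_h {H : GrpB → Prop}
    (hSchunck : ∀ G : GrpB, H G ↔ PdefClass (fun P => H P ∧ IsPrimitiveGroup P.carrier) G)
    (hXsub : SubtensorClosed (fun P => H P ∧ IsPrimitiveGroup P.carrier)) (n : ℕ) :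
    ∀ G : GrpB, Nat.card G.carrier = n → H G → ∀ A B, IsChiefFactor G.carrier A B →
      IsXCentral (fun P => H P ∧ IsPrimitiveGroup P.carrier) G.carrier A B := by
  induction n using Nat.strong_induction_on with
  | _ n ih =>
  intro G hn hG A B hAB
  obtain ⟨hfin, (hsol : Group.IsSolvable G.carrier), hprim⟩ := (hSchunck G).1 hG
  have hlift : ∀ N : Subgroup G.carrier, N.Normal → N ≠ ⊥ → ∀ R S, IsChiefFactor G.carrier R S →
      N ≤ S → IsXCentral (fun P => H P ∧ IsPrimitiveGroup P.carrier) G.carrier R S := by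
    intro N hN hN1 R S hRS hNS
    have hk : (QuotientGroup.mk' N).ker ≤ S := by rwa [QuotientGroup.ker_mk']
    refine xcentral_lift (QuotientGroup.mk' N) (QuotientGroup.mk'_surjective N) hRS hk
      (ih _ ?_ ⟨G.carrier ⧸ N⟩ rfl (h_quotient hSchunck hG (QuotientGroup.mk' N)
        (QuotientGroup.mk'_surjective N)) _ _
        (chief_map _ (QuotientGroup.mk'_surjective N) hRS hk))
    rw [← hn, N.card_eq_card_quotient_mul_card_subgroup]
    exact lt_mul_of_one_lt_right Nat.card_pos (N.one_lt_card_iff_ne_bot.2 hN1)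
  by_cases hB : B = ⊥
  · subst hB
    have hA := chief_bot.1 hAB
    obtain ⟨p, hp, hAp, hab⟩ := elementary_of_minimal hA
    obtain ⟨M, φ, hφ⟩ := exists_chief_map hA hAp hab
    refine ⟨hAB, p, hp, M, φ, hφ, ?_⟩
    by_cases hc : ∃ M : Subgroup G.carrier, A ⊓ M = ⊥ ∧ A ⊔ M = ⊤
    · obtain ⟨C, h1, h2⟩ := hc
      exact xc_of_complemented hSchunck hG hA hab hφ h1 h2
    · exact xc_of_not_complemented hXsub hp hA hAp hab M hφ hc (hlift A hA.1 hA.2.1)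
  · exact hlift B hAB.2.1 hB A B hAB le_rfl

/-- A group with central chief factors is in `H`: a primitive quotient is the split extension of
its socle, and split extensions are unique. -/
theorem h_of_xcentral {H : GrpB → Prop}
    (hHiso : IsoClosed H)
    (hSchunck : ∀ G : GrpB, H G ↔ PdefClass (fun P => H P ∧ IsPrimitiveGroup P.carrier) G)
    {G : GrpB} (hG : FClass (fun P => H P ∧ IsPrimitiveGroup P.carrier) G) :
    H G := by
  obtain ⟨hfin, (hsol : Group.IsSolvable G.carrier), hcen⟩ := hG
  refine (hSchunck G).2 ⟨hfin, hsol, fun P π hπ hP => ⟨?_, hP⟩⟩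
  have := Finite.of_surjective π hπ
  have : Group.IsSolvable P.carrier := Group.isSolvable_of_surjective hπ
  obtain ⟨K, hK, hC⟩ := hP
  obtain ⟨-, p, hp, M, φ, ⟨hch, hadd, hsurj, hker, heq⟩, E, hE, hs⟩ :=
    hcen _ _ (chief_comap π hπ hK)
  have := hch.1
  obtain ⟨e⟩ := split_unique hs (split_of_primitive M.ρ π hπ hK hC (K.comap π)
    (Subgroup.map_comap_eq_self_of_surjective hπ K) φ hadd hsurj (fun a => hker a) heq)
  exact hHiso E P hE.1 ⟨e⟩

theorem x_of_quotientIn {H : GrpB → Prop}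
    (hSchunck : ∀ G : GrpB, H G ↔ PdefClass (fun P => H P ∧ IsPrimitiveGroup P.carrier) G)
    {G : GrpB} {N : Subgroup G.carrier} (hN : QuotientIn H G N) {P : GrpB}
    (σ : G.carrier →* P.carrier) (hσ : Function.Surjective σ) (hNσ : N ≤ σ.ker)
    (hP : IsPrimitiveGroup P.carrier) : H P := by
  obtain ⟨Q, π, hπ, rfl, hQ⟩ := hN
  let τ := π.liftOfSurjective hπ ⟨σ, hNσ⟩
  have hτ : ∀ x, τ (π x) = σ x := fun x => MonoidHom.liftOfRightInverse_comp_apply _ _ _ _ x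
  refine (((hSchunck Q).1 hQ).2.2 P τ (fun y => ?_) hP).1
  obtain ⟨x, rfl⟩ := hσ y
  exact ⟨π x, hτ x⟩

/-- The subdirect product step: let `σ` be a map of `G` onto a primitive group with `N ⊓ M` in its
kernel. If `σ` kills neither `N` nor `M`, then the image of `M` is the socle, because it centralizes
the image of `N`. So the socle is isomorphic to the chief factor `MN/N(M ∩ ker σ)` of `G/N`. -/
theorem h_primitive_quotient {H : GrpB → Prop}
    (hHiso : IsoClosed H)
    (hSchunck : ∀ G : GrpB, H G ↔ PdefClass (fun P => H P ∧ IsPrimitiveGroup P.carrier) G)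
    (hcen : ∀ G : GrpB, H G → ∀ A B, IsChiefFactor G.carrier A B →
      IsXCentral (fun P => H P ∧ IsPrimitiveGroup P.carrier) G.carrier A B)
    {G : GrpB} [Finite G.carrier] [Group.IsSolvable G.carrier] {N M : Subgroup G.carrier}
    (hNn : N.Normal) (hMn : M.Normal) (hN : QuotientIn H G N) (hM : QuotientIn H G M) {P : GrpB}
    (σ : G.carrier →* P.carrier) (hσ : Function.Surjective σ) (hNM : N ⊓ M ≤ σ.ker)
    (hP : IsPrimitiveGroup P.carrier) : H P := by
  by_cases hN1 : N.map σ = ⊥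
  · exact x_of_quotientIn hSchunck hN σ hσ ((Subgroup.map_eq_bot_iff _).1 hN1) hP
  by_cases hM1 : M.map σ = ⊥
  · exact x_of_quotientIn hSchunck hM σ hσ ((Subgroup.map_eq_bot_iff _).1 hM1) hP
  have := Finite.of_surjective σ hσ
  have : Group.IsSolvable P.carrier := Group.isSolvable_of_surjective hσ
  obtain ⟨K, hK, hC⟩ := hP
  have hKN := socle_le hK hC (hNn.map σ hσ) hN1
  have hKM := socle_le hK hC (hMn.map σ hσ) hM1
  have hMK : M.map σ = K := by
    refine le_antisymm ?_ hKM
    rw [← hC]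
    rintro _ ⟨m, hm, rfl⟩
    rw [Subgroup.mem_centralizer_iff]
    intro k hk
    obtain ⟨n, hn, rfl⟩ := hKN hk
    have h1 : n * m * n⁻¹ * m⁻¹ ∈ N ⊓ M := by
      refine ⟨?_, M.mul_mem (hMn.conj_mem m hm n) (M.inv_mem hm)⟩
      have := N.mul_mem hn (hNn.conj_mem _ (N.inv_mem hn) m)
      simpa [mul_assoc] using this
    have h2 : σ (n * m * n⁻¹ * m⁻¹) = 1 := hNM h1
    simp only [map_mul, map_inv] at h2
    rw [mul_inv_eq_one, mul_inv_eq_iff_eq_mul] at h2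
    exact h2
  let R := M ⊔ N
  let S := N ⊔ (M ⊓ σ.ker)
  have hRn : R.Normal := inferInstance
  have hSn : S.Normal := inferInstance
  have hSM : ∀ m ∈ M, m ∈ S ↔ σ m = 1 := by
    intro m hm
    constructor
    · intro hmS
      rw [Subgroup.mem_sup_of_normal_left] at hmS
      obtain ⟨n, hn, x, ⟨hx, hx'⟩, rfl⟩ := hmS
      have hnM : n ∈ M := (Subgroup.mul_mem_cancel_right M hx).1 hm
      have h1 : σ n = 1 := hNM ⟨hn, hnM⟩
      rw [map_mul, h1, one_mul]
      exact hx'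
    · intro h
      exact Subgroup.mem_sup_right ⟨hm, h⟩
  have hdec : ∀ r ∈ R, ∃ m ∈ M, ∃ n ∈ N, m * n = r := fun r hr => by
    rwa [← Subgroup.mem_sup_of_normal_left]
  have hSR : S ≤ R := sup_le le_sup_right (inf_le_left.trans le_sup_left)
  have hch : IsChiefFactor G.carrier R S := by
    refine ⟨hRn, hSn, lt_of_le_of_ne hSR fun h => hM1 ?_, ?_⟩
    · rw [Subgroup.map_eq_bot_iff]
      intro m hm
      refine (hSM m hm).1 ?_
      rw [h]
      exact Subgroup.mem_sup_left hm
    · intro T hT hST hTR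
      have hNT : N ≤ T := le_sup_left.trans hST
      have hTM : ((T ⊓ M).map σ).Normal := (inferInstance : (T ⊓ M).Normal).map σ hσ
      rcases hK.2.2 _ hTM ((Subgroup.map_mono inf_le_right).trans hMK.le) with h | h
      · left
        refine le_antisymm (fun t ht => ?_) hST
        obtain ⟨m, hm, n, hn, rfl⟩ := hdec t (hTR ht)
        have hmT : m ∈ T := (Subgroup.mul_mem_cancel_right T (hNT hn)).1 ht
        rw [Subgroup.map_eq_bot_iff] at h
        exact S.mul_mem ((hSM m hm).2 (h ⟨hmT, hm⟩)) (Subgroup.mem_sup_left hn)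
      · right
        refine le_antisymm hTR (sup_le (fun m hm => ?_) hNT)
        have h1 : σ m ∈ (T ⊓ M).map σ := by
          rw [h, ← hMK]
          exact Subgroup.mem_map_of_mem _ hm
        obtain ⟨t, ⟨ht, ht'⟩, e⟩ := h1
        have h2 : m * t⁻¹ ∈ T := hST (Subgroup.mem_sup_right ⟨M.mul_mem hm (M.inv_mem ht'), by
          change σ (m * t⁻¹) = 1
          rw [map_mul, map_inv, e, mul_inv_cancel]⟩)
        simpa using T.mul_mem h2 ht
  obtain ⟨Q, π, hπ, hπN, hQ⟩ := hN
  have hkS : π.ker ≤ S := by rw [hπN]; exact le_sup_left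
  obtain ⟨-, p, hp, W, φ, ⟨-, hadd, hsurj, hker, heq⟩, E, hE, hs⟩ :=
    xcentral_lift π hπ hch hkS (hcen Q hQ _ _ (chief_map π hπ hch hkS))
  have hMR : M ≤ R := le_sup_left
  obtain ⟨e⟩ := split_unique hs (split_of_primitive W.ρ σ hσ hK hC M hMK
    (fun m => φ ⟨m, hMR m.2⟩) (fun a b => hadd ⟨a, hMR a.2⟩ ⟨b, hMR b.2⟩) (fun v => by
      obtain ⟨⟨r, hr⟩, rfl⟩ := hsurj v
      obtain ⟨m, hm, n, hn, rfl⟩ := hdec r hr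
      refine ⟨⟨m, hm⟩, ?_⟩
      have hnS : n ∈ S := Subgroup.mem_sup_left hn
      have h1 := hadd ⟨m, hMR hm⟩ ⟨n, hSR hnS⟩
      rw [(hker ⟨n, hSR hnS⟩).2 hnS, add_zero] at h1
      exact h1.symm) (fun a => (hker _).trans (hSM a a.2)) (fun g a a' h => heq g ⟨a, hMR a.2⟩ ⟨a', hMR a'.2⟩ h))
  exact hHiso E P hE.1 ⟨e⟩

/-- A normal subgroup of `G` inside the Frattini subgroup lies in the kernel of every map onto a
primitive group, since the socle of the latter is complemented. -/
theorem h_saturated {H : GrpB → Prop}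
    (hSchunck : ∀ G : GrpB, H G ↔ PdefClass (fun P => H P ∧ IsPrimitiveGroup P.carrier) G) :
    IsSaturated H := by
  intro G hfin (hsol : Group.IsSolvable G.carrier) A hAn hA hQ
  refine (hSchunck G).2 ⟨hfin, hsol, fun P σ hσ hP => ⟨?_, hP⟩⟩
  by_cases hA1 : A.map σ = ⊥
  · exact x_of_quotientIn hSchunck hQ σ hσ ((Subgroup.map_eq_bot_iff _).1 hA1) hP
  exfalso
  have := Finite.of_surjective σ hσ
  have : Group.IsSolvable P.carrier := Group.isSolvable_of_surjective hσ
  obtain ⟨K, hK, hC⟩ := hP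
  have hKA := socle_le hK hC (hAn.map σ hσ) hA1
  obtain ⟨M, h1, h2⟩ := primitive_complement hK hC
  rcases eq_top_or_exists_le_coatom (M.comap σ) with h | ⟨Y, hY, hMY⟩
  · have h3 : M = ⊤ := by
      rw [← Subgroup.map_comap_eq_self_of_surjective hσ M, h]
      exact Subgroup.map_top_of_surjective σ hσ
    rw [h3, inf_top_eq] at h1
    exact hK.2.1 h1
  · apply hY.1
    have hAY : A ≤ Y := fun x hx => hA x hx Y hY
    have hk : σ.ker ≤ Y := by
      refine le_trans ?_ hMY
      rw [← MonoidHom.comap_bot]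
      exact Subgroup.comap_mono bot_le
    rw [← Subgroup.comap_map_eq_self hk]
    have : Y.map σ = ⊤ := by
      rw [eq_top_iff, ← h2]
      refine sup_le (hKA.trans (Subgroup.map_mono hAY)) ?_
      rw [← Subgroup.map_comap_eq_self_of_surjective hσ M]
      exact Subgroup.map_mono hMY
    rw [this, Subgroup.comap_top]

/-- Barnes, Corollary 3.10 for groups. Let `H` be a Schunck class of finite
soluble groups and let `X` be the class of primitive groups in `H`. If `X` is dual closed and
subtensor closed, then `H` is a saturated formation; indeed `H` coincides with the class of all
finite soluble groups all of whose chief factors are `X`-central. -/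
theorem schunck_class_is_saturated_formation
    (H : GrpB → Prop)
    (hHiso : IsoClosed H)
    (hSchunck : ∀ G : GrpB, H G ↔ PdefClass (fun P => H P ∧ IsPrimitiveGroup P.carrier) G)
    (hXdual : DualClosed (fun P => H P ∧ IsPrimitiveGroup P.carrier))
    (hXsub : SubtensorClosed (fun P => H P ∧ IsPrimitiveGroup P.carrier)) :
    IsSaturatedFormation H ∧
      ∀ G : GrpB, H G ↔ FClass (fun P => H P ∧ IsPrimitiveGroup P.carrier) G := by
  have hcen : ∀ G : GrpB, H G → ∀ A B, IsChiefFactor G.carrier A B →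
      IsXCentral (fun P => H P ∧ IsPrimitiveGroup P.carrier) G.carrier A B :=
    fun G => xcentral_of_h hSchunck hXsub _ G rfl
  refine ⟨⟨⟨fun G _ _ hG Q π hπ => h_quotient hSchunck hG π hπ, ?_⟩, h_saturated hSchunck⟩,
    fun G => ⟨fun hG => ?_, h_of_xcentral hHiso hSchunck⟩⟩
  · intro G hfin (hsol : Group.IsSolvable G.carrier) N M hNn hMn hN hM
    have hsur := QuotientGroup.mk'_surjective (N ⊓ M)
    refine ⟨⟨G.carrier ⧸ (N ⊓ M)⟩, QuotientGroup.mk' _, hsur, QuotientGroup.ker_mk' _,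
      (hSchunck _).2 ⟨Finite.of_surjective _ hsur, Group.isSolvable_of_surjective hsur,
        fun P σ hσ hP => ⟨?_, hP⟩⟩⟩
    refine h_primitive_quotient hHiso hSchunck hcen hNn hMn hN hM
      (σ.comp (QuotientGroup.mk' (N ⊓ M))) (hσ.comp hsur) (fun x hx => ?_) hP
    rw [MonoidHom.mem_ker, MonoidHom.comp_apply, QuotientGroup.mk'_apply,
      (QuotientGroup.eq_one_iff x).2 hx, map_one]
  · obtain ⟨h1, h2, -⟩ := (hSchunck G).1 hG
    exact ⟨h1, h2, hcen G hG⟩
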